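/- arXiv:1409.3473 — 3 statements merged into one kernel-verified Lean document; each statement's English description precedes it below -/
import Mathlib

section
/- (Glassbrenner's criterion) Let (S, 𝔫) be an F-finite regular local ring of prime characteristic p, let I ⊆ S be a radical ideal, set R = S/I, and let c ∈ S \ I be an element such that the localization R_{c̄} of R at the image c̄ of c is strongly F-regular. Then R is strongly F-regular if and only if there exists e ∈ ℕ such that c·(I^{[p^e]} : I) is not contained in 𝔫^{[p^e]}. -/
open IsLocalRing Filter Topology
open scoped TensorProduct

/-- The Frobenius bracket power `I^{[q]}`: the ideal generated by `q`-th powers of elements of `I`. -/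
def Ideal.bracketPow {R : Type*} [CommRing R] (I : Ideal R) (q : ℕ) : Ideal R :=
  Ideal.span ((fun a => a ^ q) '' (I : Set R))

/-- `R°`: the set of elements of `R` not contained in any minimal prime ideal. -/
def ringCirc (R : Type*) [CommRing R] : Set R :=
  {c | ∀ P ∈ minimalPrimes R, c ∉ P}

/-- The tight closure of an ideal `I` in a ring of characteristic `p`:
`x ∈ I^*` iff there is `c ∈ R°` with `c * x ^ (p ^ e) ∈ I^{[p^e]}` for all sufficiently
large `e`. -/
def tightClosure {R : Type*} [CommRing R] (p : ℕ) (I : Ideal R) : Set R :=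
  {x | ∃ c ∈ ringCirc R, ∃ N : ℕ, ∀ e : ℕ, N ≤ e → c * x ^ p ^ e ∈ I.bracketPow (p ^ e)}

/-- `x` is integral over the ideal `J`: there are `n ≥ 1` and `aᵢ ∈ Jⁱ` with
`x ^ n + a₁ x ^ (n-1) + ⋯ + aₙ = 0`. -/
def IsIntegralOverIdeal {R : Type*} [CommRing R] (J : Ideal R) (x : R) : Prop :=
  ∃ n : ℕ, 0 < n ∧ ∃ a : ℕ → R, (∀ i ∈ Finset.Icc 1 n, a i ∈ J ^ i) ∧
    x ^ n + ∑ i ∈ Finset.Icc 1 n, a i * x ^ (n - i) = 0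

/-- `R` is F-finite: `F_*R` is a finitely generated `R`-module, i.e. there is a finite set
of generators `s` such that every element of `R` is an `R`-linear combination of elements of
`s` with respect to the Frobenius-twisted action `r • b = r ^ p * b`. -/
def FFinite (R : Type*) [CommRing R] (p : ℕ) : Prop :=
  ∃ s : Finset R, ∀ x : R, ∃ a : R → R, x = ∑ b ∈ s, a b ^ p * b

/-- The map `cF^e : R → F^e_* R`, `x ↦ c * x ^ (p ^ e)`, splits as an `R`-module
homomorphism: there is an additive `φ : R → R` with `φ (r ^ (p ^ e) * x) = r * φ x`
for all `r, x` and `φ c = 1`. -/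
def FrobSplitsWith {R : Type*} [CommRing R] (p : ℕ) (c : R) (e : ℕ) : Prop :=
  ∃ φ : R →+ R, (∀ r x : R, φ (r ^ p ^ e * x) = r * φ x) ∧ φ c = 1

/-- `R` is strongly F-regular: F-finite, reduced, and for every `c ∈ R°` some `cF^e` splits. -/
def StronglyFRegular (R : Type*) [CommRing R] (p : ℕ) : Prop :=
  FFinite R p ∧ IsReduced R ∧ ∀ c ∈ ringCirc R, ∃ e : ℕ, FrobSplitsWith p c e

/-- `R` is F-pure: the Frobenius map `R → F_* R` splits as an `R`-module homomorphism. -/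
def FPure (R : Type*) [CommRing R] (p : ℕ) : Prop :=
  ∃ φ : R →+ R, (∀ r x : R, φ (r ^ p * x) = r * φ x) ∧ φ 1 = 1

/-- A regular local ring: a Noetherian local ring whose maximal ideal can be generated by
`dim R` elements. -/
def IsRegularLocal (R : Type*) [CommRing R] [IsLocalRing R] : Prop :=
  IsNoetherianRing R ∧ ∃ (d : ℕ) (x : Fin d → R),
    ringKrullDim R = d ∧ IsLocalRing.maximalIdeal R = Ideal.span (Set.range x)

/-- The height of an ideal: the infimum of the heights of the primes containing it. -/
noncomputable def idealHeight {R : Type*} [CommRing R] (I : Ideal R) : ℕ∞ :=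
  ⨅ (P : PrimeSpectrum R) (_ : I ≤ P.asIdeal), Order.height P

/-- A parameter ideal: an ideal generated by `ht I` elements. -/
def IsParameterIdeal {R : Type*} [CommRing R] (I : Ideal R) : Prop :=
  ∃ n : ℕ, idealHeight I = n ∧ ∃ x : Fin n → R, I = Ideal.span (Set.range x)

/-- A local ring is F-rational if every parameter ideal is tightly closed. -/
def FRationalLocal (R : Type*) [CommRing R] [IsLocalRing R] (p : ℕ) : Prop :=
  ∀ I : Ideal R, IsParameterIdeal I → tightClosure p I = ↑I

/-- A Cohen–Macaulay local ring: every full system of parameters `x₁, …, x_d`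
(`d = dim B`) is a regular sequence, i.e. `(x₁, …, xᵢ) : xᵢ₊₁ = (x₁, …, xᵢ)`. -/
def IsCohenMacaulayLocalRing (B : Type*) [CommRing B] [IsLocalRing B] : Prop :=
  ∀ d : ℕ, ringKrullDim B = d →
    ∀ x : Fin d → B, (∀ i, x i ∈ IsLocalRing.maximalIdeal B) →
      (Ideal.span (Set.range x)).radical = IsLocalRing.maximalIdeal B →
      ∀ i : Fin d,
        Submodule.colon (Ideal.span (x '' {j | (j : ℕ) < (i : ℕ)})) (Ideal.span {x i}) =
          Ideal.span (x '' {j | (j : ℕ) < (i : ℕ)})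

/-- The length `ℓ_R M` of a module, as an extended natural number: the supremum of the
lengths of chains of submodules below `⊤`. -/
noncomputable def moduleLength (R M : Type*) [Ring R] [AddCommGroup M] [Module R M] : ℕ∞ :=
  Order.height (⊤ : Submodule R M)

/-- The Frobenius endomorphism `x ↦ x ^ p`, as a ring homomorphism, in prime
characteristic `p`. -/
noncomputable def frobeniusRingHom (R : Type*) [CommRing R] (p : ℕ) [Fact p.Prime] [CharP R p] :
    R →+* R :=
  frobenius R p

universe u

/-- Free of finite rank, with cyclic dual. -/
def GoodAlg (A B : Type*) [CommRing A] [CommRing B] [Algebra A B] : Prop :=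
  ∃ n : ℕ, ∃ _ : Module.Basis (Fin n) A B, ∃ Φ : B →ₗ[A] A,
    ∀ φ : B →ₗ[A] A, ∃ g : B, ∀ b, φ b = Φ (g * b)

lemma goodAlg_field (A B : Type*) [CommRing A] [CommRing B] [Algebra A B] (hA : IsField A)
    (hB : IsField B) [Module.Finite A B] : GoodAlg A B := by
  let := hA.toField
  let := hB.toField
  have : Module.Finite A B := ‹_›
  have b := Module.finBasis A B
  obtain ⟨Φ, hΦ⟩ : ∃ Φ : B →ₗ[A] A, Φ 1 ≠ 0 := by
    by_contra! h
    exact one_ne_zero ((Module.forall_dual_apply_eq_zero_iff A (1 : B)).1 h)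
  refine ⟨_, b, Φ, ?_⟩
  let T : B →ₗ[A] (B →ₗ[A] A) :=
    { toFun := fun g => Φ.comp (LinearMap.mulLeft A g)
      map_add' := by intro x y; ext z; simp [add_mul]
      map_smul' := by intro x y; ext z; simp }
  have hT : Function.Injective T := by
    rw [injective_iff_map_eq_zero]
    intro g hg
    by_contra hg0
    apply hΦ
    have := congrArg (fun f => f g⁻¹) hg
    simpa [T, hg0] using this
  have hS : Function.Surjective T :=
    (LinearMap.injective_iff_surjective_of_finrank_eq_finrank
      (Subspace.dual_finrank_eq (K := A) (V := B)).symm).1 hT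
  intro φ
  obtain ⟨g, rfl⟩ := hS φ
  exact ⟨g, fun b => rfl⟩

section lift
variable {A B : Type*} [CommRing A] [CommRing B] [Algebra A B] {ι : Type*} [Fintype ι]

lemma lift_rel_aux (x : A) (z : B) (q : ℕ) (hz : z ∈ nonZeroDivisors B)
    (hzx : z ^ q = algebraMap A B x) (β : ι → B)
    (hβ : ∀ v : ι → A, z ∣ ∑ i, v i • β i → ∀ i, x ∣ v i) (k : ℕ) (hk : k ≤ q) :
    ∀ a : ℕ → ι → A, z ^ k ∣ ∑ j ∈ Finset.range k, z ^ j * ∑ i, a j i • β i →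
      ∀ j < k, ∀ i, x ∣ a j i := by
  induction k with
  | zero => intro a _ j hj; omega
  | succ k ih =>
    intro a ha
    rw [Finset.sum_range_succ'] at ha
    simp only [pow_zero, one_mul] at ha
    have e1 : ∑ j ∈ Finset.range k, z ^ (j+1) * ∑ i, a (j+1) i • β i =
        z * ∑ j ∈ Finset.range k, z ^ j * ∑ i, a (j+1) i • β i := by
      rw [Finset.mul_sum]; exact Finset.sum_congr rfl fun j _ => by ring
    rw [e1] at ha
    have h0 : ∀ i, x ∣ a 0 i := by
      apply hβ
      have : z ∣ z ^ (k+1) := dvd_pow_self _ (by omega)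
      exact (dvd_add_right (dvd_mul_right _ _)).1 (this.trans ha)
    have h1 : z ^ (k+1) ∣ ∑ i, a 0 i • β i := by
      refine Finset.dvd_sum fun i _ => ?_
      obtain ⟨t, ht⟩ := h0 i
      rw [ht, Algebra.smul_def, map_mul, ← hzx]
      exact ((pow_dvd_pow z hk).mul_right _).mul_right _
    have h2 := (dvd_add_left h1).1 ha
    have h3 : z ^ k ∣ ∑ j ∈ Finset.range k, z ^ j * ∑ i, a (j+1) i • β i := by
      obtain ⟨t, ht⟩ := h2
      refine ⟨t, ?_⟩
      rw [pow_succ', mul_assoc] at ht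
      exact (mul_cancel_left_mem_nonZeroDivisors hz).1 ht
    intro j hj i
    rcases j with _ | j
    · exact h0 i
    · exact ih (by omega) (fun j => a (j+1)) h3 j (by omega) i

lemma lift_rel (x : A) (z : B) (q : ℕ) (hz : z ∈ nonZeroDivisors B)
    (hzx : z ^ q = algebraMap A B x) (β : ι → B)
    (hβ : ∀ v : ι → A, z ∣ ∑ i, v i • β i → ∀ i, x ∣ v i) (N : ℕ) :
    ∀ a : ℕ → ι → A, ∑ j ∈ Finset.range q, z ^ j * ∑ i, a j i • β i = 0 →
      ∀ j < q, ∀ i, x ^ N ∣ a j i := by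
  induction N with
  | zero => intro a _ j _ i; simp
  | succ N ih =>
    intro a ha
    have h := lift_rel_aux x z q hz hzx β hβ q le_rfl a (by rw [ha]; exact dvd_zero _)
    have h' : ∀ j i, ∃ t, j < q → a j i = x * t := by
      intro j i
      by_cases hj : j < q
      · obtain ⟨t, ht⟩ := h j hj i
        exact ⟨t, fun _ => ht⟩
      · exact ⟨0, fun h => absurd h hj⟩
    choose a' ha' using h'
    have : ∑ j ∈ Finset.range q, z ^ j * ∑ i, a' j i • β i = 0 := by
      have e : z ^ q * ∑ j ∈ Finset.range q, z ^ j * ∑ i, a' j i • β i = z ^ q * 0 := by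
        rw [mul_zero, ← ha, Finset.mul_sum]
        refine Finset.sum_congr rfl fun j hj => ?_
        rw [mul_left_comm, Finset.mul_sum]
        congr 1
        refine Finset.sum_congr rfl fun i _ => ?_
        rw [ha' j i (Finset.mem_range.1 hj), hzx, Algebra.smul_def, Algebra.smul_def, map_mul]
        ring
      exact (mul_cancel_left_mem_nonZeroDivisors (pow_mem hz q)).1 e
    intro j hj i
    rw [ha' j i hj, pow_succ']
    exact mul_dvd_mul_left _ (ih a' this j hj i)

lemma lift_span_aux (z : B) (β : ι → B)
    (hβ : ∀ b : B, ∃ v : ι → A, z ∣ b - ∑ i, v i • β i) (k : ℕ) (b : B) :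
    ∃ (a : ℕ → ι → A) (b' : B), b = ∑ j ∈ Finset.range k, z ^ j * ∑ i, a j i • β i + z ^ k * b' := by
  induction k generalizing b with
  | zero => exact ⟨0, b, by simp⟩
  | succ k ih =>
    obtain ⟨v, t, ht⟩ := hβ b
    obtain ⟨a, b', h⟩ := ih t
    refine ⟨fun j => match j with | 0 => v | j+1 => a j, b', ?_⟩
    rw [Finset.sum_range_succ']
    simp only [pow_zero, one_mul]
    have e1 : ∑ j ∈ Finset.range k, z ^ (j+1) * ∑ i, a j i • β i =
        z * ∑ j ∈ Finset.range k, z ^ j * ∑ i, a j i • β i := by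
      rw [Finset.mul_sum]; exact Finset.sum_congr rfl fun j _ => by ring
    rw [e1, eq_add_of_sub_eq ht, h]
    ring

lemma lift_basis [IsLocalRing A] [IsNoetherianRing A] [Module.Finite A B]
    (x : A) (hx : x ∈ maximalIdeal A) (z : B) (q : ℕ) (hz : z ∈ nonZeroDivisors B)
    (hzx : z ^ q = algebraMap A B x) (β : ι → B)
    (hβ : ∀ v : ι → A, z ∣ ∑ i, v i • β i → ∀ i, x ∣ v i)
    (hβ' : ∀ b : B, ∃ v : ι → A, z ∣ b - ∑ i, v i • β i) :
    ∃ b : Module.Basis (Fin q × ι) A B, ∀ j i, b (j, i) = z ^ (j : ℕ) * β i := by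
  let f : Fin q × ι → B := fun ji => z ^ (ji.1 : ℕ) * β ji.2
  have hsum : ∀ a : ℕ → ι → A, ∑ j ∈ Finset.range q, z ^ j * ∑ i, a j i • β i =
      ∑ ji : Fin q × ι, a ji.1 ji.2 • f ji := by
    intro a
    rw [Fintype.sum_prod_type, Finset.sum_range]
    refine Finset.sum_congr rfl fun j _ => ?_
    rw [Finset.mul_sum]
    refine Finset.sum_congr rfl fun i _ => ?_
    simp [f]
  have hli : LinearIndependent A f := by
    rw [Fintype.linearIndependent_iff]
    intro g hg
    let a : ℕ → ι → A := fun j i => if h : j < q then g (⟨j, h⟩, i) else 0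
    have ha : ∑ j ∈ Finset.range q, z ^ j * ∑ i, a j i • β i = 0 := by
      rw [hsum, ← hg]
      refine Finset.sum_congr rfl fun ji _ => ?_
      simp [a]
    rintro ⟨j, i⟩
    have key : ∀ N, x ^ N ∣ g (j, i) := by
      intro N
      have := lift_rel x z q hz hzx β hβ N a ha j j.2 i
      simpa [a] using this
    have h2 : g (j, i) ∈ (⨅ n : ℕ, maximalIdeal A ^ n) := by
      rw [Ideal.mem_iInf]
      intro N
      exact Ideal.mem_of_dvd _ (key N) (Ideal.pow_mem_pow hx N)
    rw [Ideal.iInf_pow_eq_bot_of_isLocalRing _ (Ideal.IsPrime.ne_top inferInstance)] at h2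
    exact h2
  have hsp : ⊤ ≤ Submodule.span A (Set.range f) := by
    apply Submodule.le_of_le_smul_of_le_jacobson_bot (I := maximalIdeal A) Module.Finite.fg_top
      (maximalIdeal_le_jacobson _)
    intro b _
    obtain ⟨a, b', hb⟩ := lift_span_aux z β hβ' q b
    rw [hb, hsum]
    refine Submodule.add_mem_sup ?_ ?_
    · exact Submodule.sum_mem _ fun ji _ => Submodule.smul_mem _ _ (Submodule.subset_span ⟨ji, rfl⟩)
    · rw [hzx, ← Algebra.smul_def]
      exact Submodule.smul_mem_smul hx trivial
  refine ⟨Module.Basis.mk hli hsp, fun j i => by simp [f]⟩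

end lift

section lift2
variable {A B A' B' : Type*} [CommRing A] [CommRing B] [Algebra A B] [CommRing A'] [CommRing B']
  [Algebra A' B'] {ι : Type*} [Fintype ι]

lemma basis_ind {ι : Type*} (b : Module.Basis ι A B) (P : B → Prop) (h0 : P 0)
    (hadd : ∀ u v, P u → P v → P (u + v)) (hs : ∀ (a : A) u, P u → P (a • u))
    (hb : ∀ i, P (b i)) (u : B) : P u := by
  have hu : u ∈ Submodule.span A (Set.range b) := by rw [b.span_eq]; trivial
  induction hu using Submodule.span_induction with
  | mem x h => obtain ⟨i, rfl⟩ := h; exact hb i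
  | zero => exact h0
  | add x y _ _ hx hy => exact hadd _ _ hx hy
  | smul a x _ hx => exact hs _ _ hx

lemma lift_compat (πA : A →+* A') (πB : B →+* B')
    (compat : ∀ a, πB (algebraMap A B a) = algebraMap A' B' (πA a))
    (x : A) (z : B) (hx : πA x = 0) (hz : πB z = 0) (Q : ℕ)
    (hzx : z ^ (Q + 1) = algebraMap A B x) (β : ι → B) (β' : ι → B') (hβ : ∀ i, πB (β i) = β' i)
    (b : Module.Basis (Fin (Q + 1) × ι) A B) (hb : ∀ j i, b (j, i) = z ^ (j : ℕ) * β i)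
    (φ : B →ₗ[A] A) (φ' : B' →ₗ[A'] A') (h : ∀ i, πA (φ (z ^ Q * β i)) = φ' (β' i)) (u : B) :
    πA (φ (z ^ Q * u)) = φ' (πB u) := by
  induction u using basis_ind b with
  | h0 => simp
  | hadd u v hu hv => simp [mul_add, hu, hv]
  | hs a u hu =>
    rw [mul_smul_comm, map_smul, smul_eq_mul, map_mul, hu, Algebra.smul_def, map_mul, compat,
      ← Algebra.smul_def, map_smul, smul_eq_mul]
  | hb ji =>
    obtain ⟨j, i⟩ := ji
    rw [hb]
    rcases j with ⟨j, hj⟩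
    rcases j with _ | j
    · simp [h, hβ]
    · have e : z ^ Q * (z ^ (j+1) * β i) = x • (z ^ j * β i) := by
        rw [Algebra.smul_def, ← hzx]; ring
      simp only [e]
      simp [hx, hz]

lemma lift_good [IsLocalRing A] [IsNoetherianRing A] [Module.Finite A B]
    (πA : A →+* A') (πB : B →+* B') (sA : Function.Surjective πA) (sB : Function.Surjective πB)
    (compat : ∀ a, πB (algebraMap A B a) = algebraMap A' B' (πA a))
    (x : A) (hx : x ∈ maximalIdeal A) (z : B) (q : ℕ) (hq : 0 < q) (hz : z ∈ nonZeroDivisors B)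
    (hzx : z ^ q = algebraMap A B x)
    (kA : ∀ a, πA a = 0 ↔ x ∣ a) (kB : ∀ b, πB b = 0 ↔ z ∣ b)
    (hgood : GoodAlg A' B') : GoodAlg A B := by
  obtain ⟨Q, rfl⟩ : ∃ Q, q = Q + 1 := ⟨q - 1, by omega⟩
  obtain ⟨n, β', Φ', hΦ'⟩ := hgood
  have hβ : ∀ i, ∃ y, πB y = β' i := fun i => sB _
  choose β hβ using hβ
  have hπs : ∀ (a : A) (b : B), πB (a • b) = πA a • πB b := by
    intro a b; rw [Algebra.smul_def, map_mul, compat, ← Algebra.smul_def]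
  obtain ⟨b, hb⟩ := lift_basis (ι := Fin n) x hx z (Q+1) hz hzx β (by
      intro v hv i
      rw [← kB, map_sum] at hv
      simp only [hπs, hβ] at hv
      rw [← kA]
      exact (Fintype.linearIndependent_iff.1 β'.linearIndependent) (fun i => πA (v i)) hv i) (by
      intro u
      choose v hv using fun i => sA (β'.repr (πB u) i)
      refine ⟨v, ?_⟩
      rw [← kB, map_sub, map_sum]
      simp only [hπs, hβ, hv]
      rw [β'.sum_repr, sub_self])
  have hx0 : πA x = 0 := (kA x).2 dvd_rfl
  have hz0 : πB z = 0 := (kB z).2 dvd_rfl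
  choose w hw using fun i => sA (Φ' (β' i))
  let Φ : B →ₗ[A] A := b.constr A (fun ji => if (ji.1 : ℕ) = Q then w ji.2 else 0)
  have hΦ : ∀ u, πA (Φ (z ^ Q * u)) = Φ' (πB u) := by
    apply lift_compat πA πB compat x z hx0 hz0 Q hzx β β' hβ b hb
    intro i
    have : z ^ Q * β i = b (⟨Q, by omega⟩, i) := by rw [hb]
    rw [this, show Φ (b (⟨Q, by omega⟩, i)) = _ from b.constr_basis A _ _]
    simp [hw]

  have step : ∀ φ : B →ₗ[A] A, ∃ (g : B) (ψ : B →ₗ[A] A), ∀ u, φ u = Φ (g * u) + ψ (z * u) := by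
    intro φ
    let φ' : B' →ₗ[A'] A' := β'.constr A' (fun i => πA (φ (z ^ Q * β i)))
    have h1 := lift_compat πA πB compat x z hx0 hz0 Q hzx β β' hβ b hb φ φ'
      (by intro i; simp [φ'])
    obtain ⟨g', hg'⟩ := hΦ' φ'
    obtain ⟨g, rfl⟩ := sB g'
    have h2 : ∀ u, x ∣ φ (z ^ Q * u) - Φ (g * (z ^ Q * u)) := by
      intro u
      rw [← kA, map_sub, h1, hg', mul_left_comm, hΦ, map_mul πB, sub_self]
    choose t ht using h2
    let ψ : B →ₗ[A] A := b.constr A (fun ji => if (ji.1 : ℕ) = 0 then t (β ji.2) else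
      φ (z ^ ((ji.1 : ℕ) - 1) * β ji.2) - Φ (g * (z ^ ((ji.1 : ℕ) - 1) * β ji.2)))
    refine ⟨g, ψ, ?_⟩
    have h3 : ∀ u, ψ (z * u) = φ u - Φ (g * u) := by
      intro u
      induction u using basis_ind b with
      | h0 => simp
      | hadd u v hu hv => simp only [mul_add, map_add, hu, hv]; ring
      | hs a u hu => simp only [mul_smul_comm, map_smul, hu, smul_sub]
      | hb ji =>
        obtain ⟨⟨j, hj⟩, i⟩ := ji
        rw [hb]
        by_cases hjQ : j = Q
        · subst hjQ
          have e : z * (z ^ j * β i) = x • b (⟨0, by omega⟩, i) := by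
            rw [hb, Algebra.smul_def, ← hzx]; simp; ring
          simp only [e]
          rw [ht, map_smul, show ψ (b (⟨0, by omega⟩, i)) = _ from b.constr_basis A _ _]
          simp
        · have e : z * (z ^ j * β i) = b (⟨j+1, by omega⟩, i) := by
            rw [hb]; simp; ring
          rw [e, show ψ (b (⟨j+1, by omega⟩, i)) = _ from b.constr_basis A _ _]
          simp
    intro u
    rw [h3]; ring
  have steps : ∀ k, ∀ φ : B →ₗ[A] A, ∃ (g : B) (ψ : B →ₗ[A] A),
      ∀ u, φ u = Φ (g * u) + ψ (z ^ k * u) := by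
    intro k
    induction k with
    | zero => intro φ; exact ⟨0, φ, by simp⟩
    | succ k ih =>
      intro φ
      obtain ⟨g, ψ, h⟩ := ih φ
      obtain ⟨g', ψ', h'⟩ := step ψ
      refine ⟨g + g' * z ^ k, ψ', fun u => ?_⟩
      rw [h, h', add_mul, map_add]
      ring_nf
  let N : Submodule A (B →ₗ[A] A) :=
    { carrier := {φ | ∃ g, ∀ u, φ u = Φ (g * u)}
      add_mem' := by
        rintro φ ψ ⟨g, hg⟩ ⟨h, hh⟩
        exact ⟨g + h, fun u => by simp [add_mul, hg, hh]⟩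
      zero_mem' := ⟨0, by simp⟩
      smul_mem' := by
        rintro a φ ⟨g, hg⟩
        exact ⟨a • g, fun u => by simp [hg]⟩ }
  have : Module.Free A B := Module.Free.of_basis b
  have hN : ⊤ ≤ N := by
    apply Submodule.le_of_le_smul_of_le_jacobson_bot (I := maximalIdeal A) Module.Finite.fg_top
      (maximalIdeal_le_jacobson _)
    intro φ _
    obtain ⟨g, ψ, h⟩ := steps (Q+1) φ
    have : φ = Φ.comp (LinearMap.mulLeft A g) + x • ψ := by
      ext u
      rw [h, hzx, ← Algebra.smul_def]
      simp
    rw [this]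
    refine Submodule.add_mem_sup ⟨g, fun u => rfl⟩ (Submodule.smul_mem_smul hx trivial)
  let e := (finProdFinEquiv (m := Q + 1) (n := n))
  exact ⟨_, b.reindex e, Φ, fun φ => hN (x := φ) trivial⟩

end lift2

section regular

lemma maximalIdeal_notMem_minimalPrimes (S : Type*) [CommRing S] [IsLocalRing S] (d : ℕ)
    (hd : ringKrullDim S = ((d + 1 : ℕ) : WithBot ℕ∞)) : maximalIdeal S ∉ minimalPrimes S := by
  intro h
  have h0 : (maximalIdeal S).height = 0 := Ideal.height_eq_zero_iff.2 h
  rw [← maximalIdeal_height_eq_ringKrullDim, h0] at hd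
  have : ((0 : ℕ) : WithBot ℕ∞) = ((d + 1 : ℕ) : WithBot ℕ∞) := by simpa using hd
  have := Nat.cast_injective (R := WithBot ℕ∞) this
  omega

lemma exists_param (S : Type*) [CommRing S] [IsLocalRing S] [IsNoetherianRing S] (d : ℕ)
    (x : Fin (d + 1) → S) (hd : ringKrullDim S = ((d + 1 : ℕ) : WithBot ℕ∞))
    (hx : maximalIdeal S = Ideal.span (Set.range x)) :
    ∃ y ∈ maximalIdeal S, (∀ P ∈ minimalPrimes S, y ∉ P) ∧
      ∃ x' : Fin d → S, maximalIdeal S = Ideal.span (insert y (Set.range x')) := by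
  classical
  have hmin := maximalIdeal_notMem_minimalPrimes S d hd
  have hfin := minimalPrimes.finite_of_isNoetherianRing S
  have hav : ¬ ((maximalIdeal S : Set S) ⊆ ⋃ i ∈ ((insert (maximalIdeal S ^ 2) hfin.toFinset :
      Finset (Ideal S)) : Set (Ideal S)), ((id i : Ideal S) : Set S)) := by
    rw [Ideal.subset_union_prime (maximalIdeal S ^ 2) (maximalIdeal S ^ 2)]
    · rintro ⟨P, hP, hle⟩
      rw [Finset.mem_insert, Set.Finite.mem_toFinset] at hP
      rcases hP with rfl | hP
      · have hbot : maximalIdeal S = ⊥ := by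
          apply Submodule.eq_bot_of_le_smul_of_le_jacobson_bot (maximalIdeal S) _
            (IsNoetherian.noetherian _) _ (maximalIdeal_le_jacobson _)
          rw [smul_eq_mul, ← pow_two]; exact hle
        apply hmin
        have : (⊥ : Ideal S).IsPrime := hbot ▸ inferInstance
        rw [hbot]
        exact ⟨⟨this, le_rfl⟩, fun _ _ _ => bot_le⟩
      · have hPp : P.IsPrime := hP.1.1
        have : P = maximalIdeal S := le_antisymm (le_maximalIdeal hPp.ne_top) hle
        exact hmin (this ▸ hP)
    · intro P hP h1 _
      rw [Finset.mem_insert, Set.Finite.mem_toFinset] at hP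
      exact (hP.resolve_left h1).1.1
  rw [Set.not_subset] at hav
  obtain ⟨y, hy, hy'⟩ := hav
  simp only [Finset.coe_insert, Set.Finite.coe_toFinset, Set.mem_insert_iff, id,
    Set.mem_iUnion, not_exists, SetLike.mem_coe] at hy'
  refine ⟨y, hy, fun P hP => hy' P (Or.inr hP), ?_⟩
  have hy2 := hy' _ (Or.inl rfl)
  have hyx := hy
  rw [SetLike.mem_coe, hx, Ideal.mem_span_range_iff_exists_fun] at hyx
  obtain ⟨a, ha⟩ := hyx
  have hxm : ∀ i, x i ∈ maximalIdeal S := fun i => by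
    rw [hx]; exact Ideal.subset_span ⟨i, rfl⟩
  obtain ⟨i, hi⟩ : ∃ i, IsUnit (a i) := by
    by_contra! hcon
    apply hy2
    rw [← ha, pow_two]
    exact Ideal.sum_mem _ fun i _ => Ideal.mul_mem_mul ((mem_maximalIdeal _).2 (hcon i)) (hxm i)
  refine ⟨x ∘ i.succAbove, le_antisymm ?_ ?_⟩
  · rw [hx, Ideal.span_le]
    rintro _ ⟨k, rfl⟩
    have hk : ∀ k, x (i.succAbove k) ∈ Ideal.span (insert y (Set.range (x ∘ i.succAbove))) :=
      fun k => Ideal.subset_span (Or.inr ⟨k, rfl⟩)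
    rcases Fin.eq_self_or_eq_succAbove i k with rfl | ⟨k, rfl⟩
    · rw [Fin.sum_univ_succAbove _ k] at ha
      rw [SetLike.mem_coe, ← Ideal.unit_mul_mem_iff_mem _ hi, eq_sub_of_add_eq ha]
      exact Ideal.sub_mem _ (Ideal.subset_span (Or.inl rfl))
        (Ideal.sum_mem _ fun j _ => Ideal.mul_mem_left _ _ (hk j))
    · exact hk k
  · rw [Ideal.span_le]
    rintro _ (rfl | ⟨k, rfl⟩)
    · exact hy
    · exact hxm _

lemma quot_regular (S : Type*) [CommRing S] [IsLocalRing S] [IsNoetherianRing S] (d : ℕ)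
    (hd : ringKrullDim S = ((d + 1 : ℕ) : WithBot ℕ∞)) (y : S) (hy : y ∈ maximalIdeal S)
    (x' : Fin d → S) (hx : maximalIdeal S = Ideal.span (insert y (Set.range x')))
    [IsLocalRing (S ⧸ Ideal.span {y})] :
    ringKrullDim (S ⧸ Ideal.span {y}) = (d : WithBot ℕ∞) ∧
    maximalIdeal (S ⧸ Ideal.span {y}) =
      Ideal.span (Set.range (fun i => Ideal.Quotient.mk (Ideal.span {y}) (x' i))) := by
  have hspan : maximalIdeal (S ⧸ Ideal.span {y}) =
      Ideal.span (Set.range (fun i => Ideal.Quotient.mk (Ideal.span {y}) (x' i))) := by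
    rw [← map_maximalIdeal_of_surjective (Ideal.Quotient.mk (Ideal.span {y}))
      Ideal.Quotient.mk_surjective, hx, Ideal.map_span, Set.image_insert_eq,
      Ideal.Quotient.eq_zero_iff_mem.2 (Ideal.mem_span_singleton_self y), Ideal.span_insert_zero,
      ← Set.range_comp]
    rfl
  refine ⟨le_antisymm ?_ ?_, hspan⟩
  · refine (ringKrullDim_le_spanFinrank_maximalIdeal _).trans ?_
    rw [hspan]
    have h1 := Submodule.spanFinrank_span_le_ncard_of_finite (R := S ⧸ Ideal.span {y})
      (Set.finite_range (fun i => Ideal.Quotient.mk (Ideal.span {y}) (x' i)))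
    have h2 : (Set.range (fun i => Ideal.Quotient.mk (Ideal.span {y}) (x' i))).ncard ≤ d := by
      rw [← Set.image_univ]
      exact (Set.ncard_image_le Set.finite_univ).trans (by simp [Set.ncard_univ])
    exact_mod_cast h1.trans h2
  · have h := ringKrullDim_le_ringKrullDim_quotient_add_card (R := S) {y} (by
      intro t ht
      rw [Finset.coe_singleton, Set.mem_singleton_iff] at ht
      subst ht
      rw [← Ideal.jacobson_bot]
      exact maximalIdeal_le_jacobson _ hy)
    rw [hd, Finset.coe_singleton, Finset.card_singleton] at h
    rw [← maximalIdeal_height_eq_ringKrullDim] at h ⊢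
    generalize (maximalIdeal (S ⧸ Ideal.span {y})).height = t at h ⊢
    induction t using ENat.recTopCoe with
    | top => exact le_top
    | coe t =>
      have : (d + 1 : ℕ) ≤ t + 1 := by exact_mod_cast h
      have : d ≤ t := by omega
      exact_mod_cast this

lemma regular_isDomain (d : ℕ) : ∀ (S : Type u) [CommRing S] [IsLocalRing S] [IsNoetherianRing S]
    (x : Fin d → S) (_ : ringKrullDim S = (d : WithBot ℕ∞))
    (_ : maximalIdeal S = Ideal.span (Set.range x)), IsDomain S := by
  induction d with
  | zero =>
    intro S _ _ _ x _ hx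
    have : maximalIdeal S = ⊥ := by rw [hx]; simp
    exact (isField_iff_maximalIdeal_eq.2 this).isDomain
  | succ d ih =>
    intro S _ _ _ x hd hx
    obtain ⟨y, hy, hyP, x', hx'⟩ := exists_param S d x hd hx
    have : Nontrivial (S ⧸ Ideal.span {y}) := Ideal.Quotient.nontrivial_iff.2 (by
      intro h
      rw [Ideal.span_singleton_eq_top] at h
      exact (mem_maximalIdeal _).1 hy h)
    have : IsLocalRing (S ⧸ Ideal.span {y}) :=
      of_surjective' (Ideal.Quotient.mk (Ideal.span {y})) Ideal.Quotient.mk_surjective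
    obtain ⟨h1, h2⟩ := quot_regular S d hd y hy x' hx'
    have := ih (S ⧸ Ideal.span {y}) _ h1 h2
    have hprime : (Ideal.span {y}).IsPrime := (Ideal.Quotient.isDomain_iff_prime _).1 this
    obtain ⟨P, hP, hle⟩ := Ideal.exists_minimalPrimes_le (bot_le (a := Ideal.span {y}))
    have hPp : P.IsPrime := hP.1.1
    have hbot : P = ⊥ := by
      apply Submodule.eq_bot_of_le_smul_of_le_jacobson_bot (maximalIdeal S) _
            (IsNoetherian.noetherian _) _ (maximalIdeal_le_jacobson _)
      intro t ht
      obtain ⟨u, rfl⟩ := Ideal.mem_span_singleton.1 (hle ht)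
      have hu : u ∈ P := (hPp.mem_or_mem ht).resolve_left (hyP P hP)
      exact Submodule.smul_mem_smul hy hu
    rw [hbot] at hPp
    exact IsDomain.of_bot_isPrime S

lemma regular_good (d : ℕ) (q : ℕ) (hq : 0 < q) : ∀ (S : Type u) [CommRing S] [IsLocalRing S]
    [IsNoetherianRing S] (x : Fin d → S) (_ : ringKrullDim S = (d : WithBot ℕ∞))
    (_ : maximalIdeal S = Ideal.span (Set.range x)) (f : S →+* S) (_ : ∀ s, f s = s ^ q)
    (_ : f.Finite), @GoodAlg S S _ _ f.toAlgebra := by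
  induction d with
  | zero =>
    intro S _ _ _ x _ hx f hf hfin
    have : maximalIdeal S = ⊥ := by rw [hx]; simp
    have hF := (isField_iff_maximalIdeal_eq.2 this)
    exact @goodAlg_field S S _ _ f.toAlgebra hF hF hfin
  | succ d ih =>
    intro S _ _ _ x hd hx f hf hfin
    have := regular_isDomain (d+1) S x hd hx
    obtain ⟨y, hy, hyP, x', hx'⟩ := exists_param S d x hd hx
    have hy0 : y ≠ 0 := by
      rintro rfl
      obtain ⟨P, hP, -⟩ := Ideal.exists_minimalPrimes_le (bot_le (a := maximalIdeal S))
      exact hyP P hP P.zero_mem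
    have : Nontrivial (S ⧸ Ideal.span {y}) := Ideal.Quotient.nontrivial_iff.2 (by
      intro h
      rw [Ideal.span_singleton_eq_top] at h
      exact (mem_maximalIdeal _).1 hy h)
    have : IsLocalRing (S ⧸ Ideal.span {y}) :=
      of_surjective' (Ideal.Quotient.mk (Ideal.span {y})) Ideal.Quotient.mk_surjective
    obtain ⟨h1, h2⟩ := quot_regular S d hd y hy x' hx'
    let f' : S ⧸ Ideal.span {y} →+* S ⧸ Ideal.span {y} := Ideal.quotientMap _ f (by
      rw [Ideal.span_singleton_le_iff_mem, Ideal.mem_comap, hf]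
      exact Ideal.pow_mem_of_mem _ (Ideal.mem_span_singleton_self y) _ hq)
    have hf'mk : ∀ s, f' (Ideal.Quotient.mk _ s) = Ideal.Quotient.mk _ (f s) := fun s => by
      simp [f']
    have hf' : ∀ s, f' s = s ^ q := by
      intro s
      obtain ⟨s, rfl⟩ := Ideal.Quotient.mk_surjective s
      rw [hf'mk, hf, map_pow]
    have hfin' : f'.Finite := by
      apply RingHom.Finite.of_comp_finite (f := Ideal.Quotient.mk (Ideal.span {y}))
      have : f'.comp (Ideal.Quotient.mk (Ideal.span {y})) =
          (Ideal.Quotient.mk (Ideal.span {y})).comp f := by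
        ext s; exact hf'mk s
      rw [this]
      exact (RingHom.Finite.of_surjective _ Ideal.Quotient.mk_surjective).comp hfin
    have hg := ih (S ⧸ Ideal.span {y}) _ h1 h2 f' hf' hfin'
    have hker : ∀ a, Ideal.Quotient.mk (Ideal.span {y}) a = 0 ↔ y ∣ a := by
      intro a; rw [Ideal.Quotient.eq_zero_iff_mem, Ideal.mem_span_singleton]
    exact @lift_good S S (S ⧸ Ideal.span {y}) (S ⧸ Ideal.span {y}) _ _ f.toAlgebra _ _ f'.toAlgebra
      _ _ hfin (Ideal.Quotient.mk (Ideal.span {y})) (Ideal.Quotient.mk (Ideal.span {y}))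
      Ideal.Quotient.mk_surjective Ideal.Quotient.mk_surjective
      (fun a => (hf'mk a).symm) y hy y q hq (mem_nonZeroDivisors_of_ne_zero hy0) (hf y).symm
      hker hker hg

end regular

section frob

lemma finite_gen {A B : Type*} [CommRing A] [CommRing B] [Algebra A B] :
    (∃ s : Finset B, ∀ x, ∃ a : B → A, x = ∑ b ∈ s, algebraMap A B (a b) * b) ↔
      Module.Finite A B := by
  simp only [← Algebra.smul_def]
  constructor
  · rintro ⟨s, hs⟩
    refine ⟨⟨s, ?_⟩⟩
    rw [eq_top_iff]
    intro x _
    obtain ⟨a, rfl⟩ := hs x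
    exact Submodule.sum_mem _ fun b hb => Submodule.smul_mem _ _ (Submodule.subset_span hb)
  · rintro ⟨⟨s, hs⟩⟩
    refine ⟨s, fun x => ?_⟩
    have hx : x ∈ (⊤ : Submodule A B) := trivial
    rw [← hs, Submodule.mem_span_finset] at hx
    obtain ⟨a, -, h⟩ := hx
    exact ⟨a, h.symm⟩

lemma ffinite_iff_finite {R : Type*} [CommRing R] (p : ℕ) (f : R →+* R) (hf : ∀ r, f r = r ^ p) :
    FFinite R p ↔ f.Finite := by
  have h : (∃ s : Finset R, ∀ x, ∃ a : R → R, x = ∑ b ∈ s, f (a b) * b) ↔ f.Finite :=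
    @finite_gen R R _ _ f.toAlgebra
  simp only [hf] at h
  exact h

lemma goodAlg_elem {A B : Type*} [CommRing A] [CommRing B] [Algebra A B] (h : GoodAlg A B) :
    ∃ (n : ℕ) (β : Fin n → B) (π : Fin n → B →+ A) (Φ : B →+ A),
      (∀ k r s, π k (algebraMap A B r * s) = r * π k s) ∧
      (∀ s, s = ∑ k, algebraMap A B (π k s) * β k) ∧
      (∀ r s, Φ (algebraMap A B r * s) = r * Φ s) ∧
      ∀ φ : B →+ A, (∀ r s, φ (algebraMap A B r * s) = r * φ s) → ∃ g, ∀ s, φ s = Φ (g * s) := by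
  obtain ⟨n, b, Φ, hΦ⟩ := h
  simp only [← Algebra.smul_def]
  refine ⟨n, b, fun k => (b.coord k).toAddMonoidHom, Φ.toAddMonoidHom, ?_, ?_, ?_, ?_⟩
  · intro k r s
    exact (b.coord k).map_smul r s
  · intro s
    exact (b.sum_repr s).symm
  · intro r s
    exact Φ.map_smul r s
  · intro φ h
    exact hΦ { toFun := φ, map_add' := φ.map_add, map_smul' := h }

lemma exists_frob (S : Type*) [CommRing S] (p : ℕ) [Fact p.Prime] [CharP S p] (hFF : FFinite S p)
    (e : ℕ) : ∃ f : S →+* S, (∀ s, f s = s ^ p ^ e) ∧ f.Finite := by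
  induction e with
  | zero => exact ⟨RingHom.id S, by simp, RingHom.Finite.id S⟩
  | succ e ih =>
    obtain ⟨f, hf, hfin⟩ := ih
    refine ⟨(frobenius S p).comp f, fun s => ?_, RingHom.Finite.comp
      ((ffinite_iff_finite p _ (fun r => frobenius_def p r)).1 hFF) hfin⟩
    rw [RingHom.comp_apply, hf, frobenius_def, ← pow_mul, pow_succ]

lemma quot_ffinite (S : Type*) [CommRing S] (p : ℕ) [hp : Fact p.Prime] [CharP S p]
    (hFF : FFinite S p) (I : Ideal S) : FFinite (S ⧸ I) p := by
  let f' : S ⧸ I →+* S ⧸ I := Ideal.quotientMap _ (frobenius S p) (by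
    intro s hs
    rw [Ideal.mem_comap, frobenius_def]
    exact Ideal.pow_mem_of_mem _ hs _ hp.out.pos)
  have hf'mk : ∀ s, f' (Ideal.Quotient.mk _ s) = Ideal.Quotient.mk _ (frobenius S p s) := fun s => by
    simp [f']
  refine (ffinite_iff_finite p f' ?_).2 ?_
  · intro s
    obtain ⟨s, rfl⟩ := Ideal.Quotient.mk_surjective s
    rw [hf'mk, frobenius_def, map_pow]
  · apply RingHom.Finite.of_comp_finite (f := Ideal.Quotient.mk I)
    have : f'.comp (Ideal.Quotient.mk I) = (Ideal.Quotient.mk I).comp (frobenius S p) := by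
      ext s; exact hf'mk s
    rw [this]
    exact (RingHom.Finite.of_surjective _ Ideal.Quotient.mk_surjective).comp
      ((ffinite_iff_finite p _ (fun r => frobenius_def p r)).1 hFF)

/-- Structure of `F^e_* S` for an F-finite regular local ring, in elementary terms. -/
lemma regular_frob (S : Type*) [CommRing S] [IsLocalRing S] [IsNoetherianRing S] (p : ℕ)
    [hp : Fact p.Prime] [CharP S p] (hreg : IsRegularLocal S) (hFF : FFinite S p) (e : ℕ) :
    ∃ (n : ℕ) (β : Fin n → S) (π : Fin n → S →+ S) (Φ : S →+ S),
      (∀ k r s, π k (r ^ p ^ e * s) = r * π k s) ∧ (∀ s, s = ∑ k, π k s ^ p ^ e * β k) ∧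
      (∀ r s, Φ (r ^ p ^ e * s) = r * Φ s) ∧
      ∀ φ : S →+ S, (∀ r s, φ (r ^ p ^ e * s) = r * φ s) → ∃ g, ∀ s, φ s = Φ (g * s) := by
  obtain ⟨-, d, x, hd, hx⟩ := hreg
  obtain ⟨f, hf, hfin⟩ := exists_frob S p hFF e
  have h : ∃ (n : ℕ) (β : Fin n → S) (π : Fin n → S →+ S) (Φ : S →+ S),
      (∀ k r s, π k (f r * s) = r * π k s) ∧ (∀ s, s = ∑ k, f (π k s) * β k) ∧
      (∀ r s, Φ (f r * s) = r * Φ s) ∧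
      ∀ φ : S →+ S, (∀ r s, φ (f r * s) = r * φ s) → ∃ g, ∀ s, φ s = Φ (g * s) :=
    @goodAlg_elem S S _ _ f.toAlgebra
      (regular_good d (p ^ e) (pow_pos hp.out.pos e) S x hd hx f hf hfin)
  simp only [hf] at h
  exact h

lemma map_bracketPow {S : Type*} [CommRing S] (q : ℕ) (φ : S →+ S)
    (h : ∀ r s, φ (r ^ q * s) = r * φ s) (J : Ideal S) (u : S) (hu : u ∈ J.bracketPow q) :
    φ u ∈ J := by
  have : ∀ t, φ (t * u) ∈ J := by
    induction hu using Submodule.span_induction with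
    | mem y hy =>
      obtain ⟨a, ha, rfl⟩ := hy
      intro t
      simp only [mul_comm t, h]
      exact J.mul_mem_right _ ha
    | zero => simp
    | add y z _ _ hy hz => intro t; rw [mul_add, map_add]; exact J.add_mem (hy t) (hz t)
    | smul a y _ hy => intro t; rw [smul_eq_mul, ← mul_assoc]; exact hy _
  simpa using this 1

lemma fedder (S : Type*) [CommRing S] [IsLocalRing S]
    [IsNoetherianRing S] (p : ℕ) [Fact p.Prime] [CharP S p]
    (hreg : IsRegularLocal S) (hFF : FFinite S p)
    (I : Ideal S) (c : S) (hI : I ≠ ⊤) (e : ℕ) :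
    FrobSplitsWith p (Ideal.Quotient.mk I c) e ↔
      ¬ (Ideal.span {c} * Submodule.colon (I.bracketPow (p ^ e)) I ≤
          (IsLocalRing.maximalIdeal S).bracketPow (p ^ e)) := by
  obtain ⟨n, β, π, Φ, hπ, hβ, hΦ, hgen⟩ := regular_frob S p hreg hFF e
  have hmem : ∀ (J : Ideal S) (u : S), (∀ k, π k u ∈ J) → u ∈ J.bracketPow (p ^ e) := by
    intro J u h
    rw [hβ u]
    exact Ideal.sum_mem _ fun k _ => Ideal.mul_mem_right _ _ (Ideal.subset_span ⟨_, h k, rfl⟩)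
  constructor
  · rintro ⟨φ', hφ', hc⟩ hle
    choose w hw using fun k => Ideal.Quotient.mk_surjective (φ' (Ideal.Quotient.mk I (β k)))
    let φ : S →+ S := ∑ k, (AddMonoidHom.mulRight (w k)).comp (π k)
    have hφa : ∀ s, φ s = ∑ k, π k s * w k := by intro s; simp [φ]
    have hφ : ∀ r s, φ (r ^ p ^ e * s) = r * φ s := by
      intro r s
      rw [hφa, hφa, Finset.mul_sum]
      exact Finset.sum_congr rfl fun k _ => by rw [hπ, mul_assoc]
    have hlift : ∀ s, Ideal.Quotient.mk I (φ s) = φ' (Ideal.Quotient.mk I s) := by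
      intro s
      conv_rhs => rw [hβ s]
      rw [hφa, map_sum, map_sum, map_sum]
      refine Finset.sum_congr rfl fun k _ => ?_
      rw [map_mul, map_mul, map_pow, hφ', hw]
    obtain ⟨g, hg⟩ := hgen φ hφ
    have hφI : ∀ i ∈ I, φ i ∈ I := by
      intro i hi
      rw [← Ideal.Quotient.eq_zero_iff_mem, hlift, Ideal.Quotient.eq_zero_iff_mem.2 hi, map_zero]
    have hgc : g ∈ Submodule.colon (I.bracketPow (p ^ e)) (I : Set S) := by
      rw [Submodule.mem_colon]
      intro i hi
      apply hmem
      intro k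
      obtain ⟨h, hh⟩ := hgen (π k) (hπ k)
      rw [hh, smul_eq_mul, mul_left_comm, ← hg]
      exact hφI _ (I.mul_mem_left _ hi)
    have h1 := hle (Ideal.mul_mem_mul (Ideal.mem_span_singleton_self c) hgc)
    have h2 := map_bracketPow _ Φ hΦ _ _ h1
    rw [mul_comm, ← hg] at h2
    have h3 : φ c - 1 ∈ I := by
      rw [← Ideal.Quotient.eq_zero_iff_mem, map_sub, hlift, hc, map_one, sub_self]
    have h4 := Ideal.sub_mem _ h2 (le_maximalIdeal hI h3)
    rw [sub_sub_cancel] at h4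
    exact (Ideal.ne_top_iff_one _).1 (Ideal.IsPrime.ne_top inferInstance) h4
  · intro h
    rw [Ideal.span_singleton_mul_le_iff] at h
    push Not at h
    obtain ⟨g, hg, hcg⟩ := h
    rw [Submodule.mem_colon] at hg
    obtain ⟨k, hk⟩ : ∃ k, π k (c * g) ∉ maximalIdeal S := by
      by_contra! hcon
      exact hcg (hmem _ _ hcon)
    obtain ⟨v, hv⟩ : ∃ v, v * π k (c * g) = 1 := by
      have : IsUnit (π k (c * g)) := by
        by_contra hu
        exact hk ((mem_maximalIdeal _).2 hu)
      exact this.exists_left_inv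
    let ψ : S →+ S := (AddMonoidHom.mulLeft v).comp ((π k).comp (AddMonoidHom.mulRight g))
    have hψa : ∀ s, ψ s = v * π k (s * g) := fun s => rfl
    let φ : S ⧸ I →+ S ⧸ I := QuotientAddGroup.map _ _ ψ (by
      intro i hi
      change ψ i ∈ I
      rw [hψa]
      refine I.mul_mem_left _ (map_bracketPow _ (π k) (hπ k) _ _ ?_)
      rw [mul_comm]
      exact hg i hi)
    have hφ : ∀ s, φ (Ideal.Quotient.mk I s) = Ideal.Quotient.mk I (ψ s) := fun s => rfl
    refine ⟨φ, ?_, ?_⟩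
    · intro r s
      obtain ⟨r, rfl⟩ := Ideal.Quotient.mk_surjective r
      obtain ⟨s, rfl⟩ := Ideal.Quotient.mk_surjective s
      rw [← map_pow, ← map_mul, hφ, hφ, ← map_mul, hψa, hψa, mul_assoc, hπ, mul_left_comm]
    · rw [hφ, hψa, hv, map_one]

lemma split_iterate {R : Type*} [CommRing R] (p : ℕ) [hp : Fact p.Prime] (c : R) (e : ℕ)
    (h : FrobSplitsWith p c e) (m : ℕ) : ∃ M, m ≤ M ∧ FrobSplitsWith p (c ^ M) (m * e) := by
  obtain ⟨χ, hχ, hc⟩ := h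
  induction m with
  | zero => exact ⟨0, le_rfl, AddMonoidHom.id R, by simp, by simp⟩
  | succ m ih =>
    obtain ⟨M, hM, ψ, hψ, hψc⟩ := ih
    refine ⟨M * p ^ e + 1, ?_, ψ.comp χ, ?_, ?_⟩
    · have : M ≤ M * p ^ e := Nat.le_mul_of_pos_right _ (pow_pos hp.out.pos e)
      omega
    · intro r x
      have : r ^ p ^ ((m+1) * e) = (r ^ p ^ (m * e)) ^ p ^ e := by
        rw [← pow_mul, ← pow_add]; congr 2; ring
      rw [this, AddMonoidHom.comp_apply, hχ, hψ, AddMonoidHom.comp_apply]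
    · rw [AddMonoidHom.comp_apply, pow_succ, pow_mul, hχ, hc, mul_one, hψc]

lemma split_of_loc {R : Type*} [CommRing R] (p : ℕ) [hp : Fact p.Prime] (c : R)
    (hgen : ∀ e, ∃ (n : ℕ) (β : Fin n → R), ∀ x, ∃ a : Fin n → R, x = ∑ k, a k ^ p ^ e * β k)
    (e₀ : ℕ) (hs : FrobSplitsWith p c e₀) (hloc : StronglyFRegular (Localization.Away c) p) :
    ∀ d ∈ ringCirc R, ∃ e, FrobSplitsWith p d e := by
  intro d hd
  have hcn : c ∈ nonZeroDivisors R := by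
    obtain ⟨χ, hχ, hc⟩ := hs
    rw [mem_nonZeroDivisors_iff_right]
    intro x hx
    have h1 := hχ x c
    have h2 : x ^ p ^ e₀ * c = 0 := by
      obtain ⟨t, ht⟩ : ∃ t, p ^ e₀ = t + 1 := ⟨p ^ e₀ - 1, by
        have := pow_pos hp.out.pos e₀; omega⟩
      rw [ht, pow_succ, mul_assoc, hx, mul_zero]
    rw [h2, map_zero, hc, mul_one] at h1
    exact h1.symm
  have hinj : Function.Injective (algebraMap R (Localization.Away c)) :=
    IsLocalization.injective _ (M := Submonoid.powers c) (Submonoid.powers_le.2 hcn)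
  have hd' : algebraMap R (Localization.Away c) d ∈ ringCirc (Localization.Away c) := by
    intro P hP hdP
    have h := IsLocalization.minimalPrimes_comap (Submonoid.powers c) (Localization.Away c) ⊥
    have hb : Ideal.comap (algebraMap R (Localization.Away c)) ⊥ = ⊥ := by
      rw [← RingHom.ker_eq_comap_bot]; exact (RingHom.injective_iff_ker_eq_bot _).1 hinj
    rw [hb] at h
    have h2 : Ideal.comap (algebraMap R (Localization.Away c)) P ∈ (⊥ : Ideal R).minimalPrimes := by
      rw [h]; exact ⟨P, hP, rfl⟩
    exact hd _ h2 hdP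
  obtain ⟨e, ψ, hψ, hψd⟩ := hloc.2.2 _ hd'
  obtain ⟨n, β, hβ⟩ := hgen e
  obtain ⟨⟨_, N, rfl⟩, hN⟩ := IsLocalization.exist_integer_multiples_of_finite
    (Submonoid.powers c) (fun k => ψ (algebraMap R (Localization.Away c) (β k)))
  have hlifts : ∀ x, ∃ y, algebraMap R (Localization.Away c) y =
      algebraMap R _ (c ^ N) * ψ (algebraMap R _ x) := by
    intro x
    obtain ⟨a, rfl⟩ := hβ x
    choose w hw using hN
    refine ⟨∑ k, a k * w k, ?_⟩
    rw [map_sum, map_sum, map_sum, Finset.mul_sum]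
    refine Finset.sum_congr rfl fun k _ => ?_
    rw [map_mul, map_mul, map_pow _ (a k), hψ, hw, Algebra.smul_def]
    ring
  choose φ hφ using hlifts
  obtain ⟨M, hM, χ, hχ, hχc⟩ := split_iterate p c e₀ hs N
  have hφadd : ∀ x y, φ (x + y) = φ x + φ y := fun x y => hinj (by
    rw [map_add, hφ, hφ, hφ, map_add, map_add, mul_add])
  have hφs : ∀ r x, φ (r ^ p ^ e * x) = r * φ x := fun r x => hinj (by
    rw [map_mul, hφ, hφ, map_mul, map_pow _ r, hψ, mul_left_comm])
  have hφd : φ d = c ^ N := hinj (by rw [hφ, hψd, mul_one])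
  refine ⟨e + N * e₀, χ.comp ((AddMonoidHom.mulLeft (c ^ (M - N))).comp
    (AddMonoidHom.mk' φ hφadd)), ?_, ?_⟩
  · intro r x
    have : r ^ p ^ (e + N * e₀) = (r ^ p ^ (N * e₀)) ^ p ^ e := by
      rw [← pow_mul, ← pow_add, add_comm]
    simp only [AddMonoidHom.comp_apply, AddMonoidHom.mk'_apply, AddMonoidHom.coe_mulLeft]
    rw [this, hφs, mul_left_comm, hχ]
  · simp only [AddMonoidHom.comp_apply, AddMonoidHom.mk'_apply, AddMonoidHom.coe_mulLeft]
    rw [hφd, ← pow_add, Nat.sub_add_cancel hM, hχc]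

lemma circ_of_ne_zero {R : Type*} [CommRing R] [IsLocalRing R] [IsNoetherianRing R] (p : ℕ)
    [hp : Fact p.Prime] (h : StronglyFRegular R p) (c : R) (hc : c ≠ 0) : c ∈ ringCirc R := by
  classical
  intro P₀ hP₀ hcP₀
  obtain ⟨-, hred, hsplit⟩ := h
  have hfin := minimalPrimes.finite_of_isNoetherianRing R
  let T : Finset (Ideal R) := hfin.toFinset.filter (fun P => c ∈ P)
  let T' : Finset (Ideal R) := hfin.toFinset.filter (fun P => c ∉ P)
  have hT : ∀ P, P ∈ T ↔ P ∈ minimalPrimes R ∧ c ∈ P := by simp [T]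
  have hT' : ∀ P, P ∈ T' ↔ P ∈ minimalPrimes R ∧ c ∉ P := by simp [T']
  have hav : ¬ (((T'.inf id : Ideal R) : Set R) ⊆ ⋃ i ∈ (T : Set (Ideal R)), ((id i : Ideal R) : Set R)) := by
    rw [Ideal.subset_union_prime (f := id) ⊥ ⊥ (fun P hP _ _ => ((hT P).1 hP).1.1.1)]
    rintro ⟨Q, hQ, hle⟩
    obtain ⟨hQ1, hQ2⟩ := (hT Q).1 hQ
    have : Q.IsPrime := hQ1.1.1
    obtain ⟨P, hP, hPQ⟩ := (Ideal.IsPrime.inf_le' this).1 hle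
    obtain ⟨hP1, hP2⟩ := (hT' P).1 hP
    exact hP2 (hQ1.2 hP1.1 hPQ hQ2)
  rw [Set.not_subset] at hav
  obtain ⟨y, hy, hy'⟩ := hav
  simp only [Set.mem_iUnion, not_exists, id, SetLike.mem_coe] at hy'
  have hyT' : ∀ P ∈ T', y ∈ P := fun P hP => (Finset.inf_le hP : T'.inf id ≤ id P) hy
  have hcirc : c + y ∈ ringCirc R := by
    intro P hP hmem
    by_cases hcP : c ∈ P
    · exact hy' P ((hT P).2 ⟨hP, hcP⟩) ((Ideal.add_mem_iff_right _ hcP).1 hmem)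
    · exact hcP ((Ideal.add_mem_iff_left _ (hyT' P ((hT' P).2 ⟨hP, hcP⟩))).1 hmem)
  have hcy : c * y = 0 := by
    have hnil : c * y ∈ nilradical R := by
      rw [nilradical, ← Ideal.sInf_minimalPrimes, Ideal.mem_sInf]
      intro P hP
      by_cases hcP : c ∈ P
      · exact P.mul_mem_right _ hcP
      · exact P.mul_mem_left _ (hyT' P ((hT' P).2 ⟨hP, hcP⟩))
    exact (mem_nilradical.1 hnil).eq_zero
  have hy0 : y ≠ 0 := by
    rintro rfl
    exact hy' P₀ ((hT _).2 ⟨hP₀, hcP₀⟩) P₀.zero_mem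
  obtain ⟨e, φ, hφ, h1⟩ := hsplit _ hcirc
  obtain ⟨t, ht⟩ : ∃ t, p ^ e = t + 1 := ⟨p ^ e - 1, by
        have := pow_pos hp.out.pos e; omega⟩
  have hz1 : y * φ c = 0 := by
    rw [← hφ, ht, pow_succ, mul_assoc, mul_comm y c, hcy, mul_zero, map_zero]
  have hz2 : c * φ y = 0 := by
    rw [← hφ, ht, pow_succ, mul_assoc, hcy, mul_zero, map_zero]
  rw [map_add] at h1
  rcases IsLocalRing.isUnit_or_isUnit_of_add_one h1 with hu | hu
  · exact hy0 ((hu.mul_left_eq_zero).1 hz1)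
  · exact hc ((hu.mul_left_eq_zero).1 hz2)

end frob

/-- **Glassbrenner's criterion.** Let `(S, 𝔫)` be an F-finite regular local ring of
characteristic `p`, `I` a radical ideal, `R = S/I` and `c ∈ S \ I` such that the
localization of `R` at the image of `c` is strongly F-regular. Then `R` is strongly
F-regular if and only if `c·(I^{[p^e]} : I) ⊄ 𝔫^{[p^e]}` for some `e`. -/
theorem glassbrenner_criterion (S : Type*) [CommRing S] [IsLocalRing S]
    [IsNoetherianRing S] (p : ℕ) [Fact p.Prime] [CharP S p]
    (hreg : IsRegularLocal S) (hFF : FFinite S p)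
    (I : Ideal S) (hrad : I.IsRadical)
    (c : S) (hc : c ∉ I)
    (hloc : StronglyFRegular (Localization.Away (Ideal.Quotient.mk I c)) p) :
    StronglyFRegular (S ⧸ I) p ↔
      ∃ e : ℕ, ¬ (Ideal.span {c} * Submodule.colon (I.bracketPow (p ^ e)) I ≤
          (IsLocalRing.maximalIdeal S).bracketPow (p ^ e)) := by
  have hI : I ≠ ⊤ := by rintro rfl; exact hc trivial
  have : Nontrivial (S ⧸ I) := Ideal.Quotient.nontrivial_iff.2 hI
  have : IsLocalRing (S ⧸ I) :=
    of_surjective' (Ideal.Quotient.mk I) Ideal.Quotient.mk_surjective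
  constructor
  · intro h
    have hc' : Ideal.Quotient.mk I c ∈ ringCirc (S ⧸ I) :=
      circ_of_ne_zero p h _ (by rwa [Ne, Ideal.Quotient.eq_zero_iff_mem])
    obtain ⟨e, he⟩ := h.2.2 _ hc'
    exact ⟨e, (fedder S p hreg hFF I c hI e).1 he⟩
  · rintro ⟨e, he⟩
    have hs := (fedder S p hreg hFF I c hI e).2 he
    refine ⟨quot_ffinite S p hFF I, (Ideal.isRadical_iff_quotient_reduced I).1 hrad, ?_⟩
    refine split_of_loc p _ ?_ e hs hloc
    intro e'
    obtain ⟨n, β, π, -, -, hβ, -⟩ := regular_frob S p hreg hFF e'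
    refine ⟨n, fun k => Ideal.Quotient.mk I (β k), fun x => ?_⟩
    obtain ⟨x, rfl⟩ := Ideal.Quotient.mk_surjective x
    refine ⟨fun k => Ideal.Quotient.mk I (π k x), ?_⟩
    conv_lhs => rw [hβ x]
    simp
end

section
/- (Monsky) Let (A, 𝔪) be a d-dimensional Noetherian local ring of prime characteristic p and let I ⊆ A be an 𝔪-primary ideal. Then the sequence of real numbers e ↦ ℓ_A(A/I^{[p^e]})/p^{ed} converges as e → ∞; that is, the Hilbert–Kunz multiplicity e_HK(I) := lim_{e→∞} ℓ_A(A/I^{[p^e]})/p^{ed} exists. -/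
open IsLocalRing Filter Topology
open scoped TensorProduct

namespace HKMonsky

/-! ### A convergence lemma for real sequences -/

lemma tendsto_inv_pow (p : ℕ) (hp : 2 ≤ p) (K : ℝ) :
    Filter.Tendsto (fun e : ℕ => K / (p : ℝ) ^ e) Filter.atTop (nhds 0) := by
  have h1 : (1 : ℝ) < p := by exact_mod_cast hp
  have := (tendsto_pow_atTop_nhds_zero_of_lt_one (r := (p : ℝ)⁻¹) (by positivity)
    (inv_lt_one_of_one_lt₀ h1)).const_mul K
  simpa [div_eq_mul_inv] using this

lemma tail_step (p : ℕ) (hp : 2 ≤ p) (K : ℝ) (hK : 0 ≤ K) (e : ℕ) :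
    K / (p : ℝ) ^ e + 2 * K / (p : ℝ) ^ (e + 1) ≤ 2 * K / (p : ℝ) ^ e := by
  have h1 : (2 : ℝ) ≤ p := by exact_mod_cast hp
  have hpos : (0 : ℝ) < (p : ℝ) ^ e := by positivity
  have : 2 * K / (p : ℝ) ^ (e + 1) ≤ K / (p : ℝ) ^ e := by
    rw [pow_succ, div_le_div_iff₀ (by positivity) hpos]
    nlinarith [mul_nonneg hK hpos.le]
  have h3 : 2 * K / (p : ℝ) ^ e = K / (p : ℝ) ^ e + K / (p : ℝ) ^ e := by ring
  linarith

lemma conv_of_le (p : ℕ) (hp : 2 ≤ p) (u : ℕ → ℝ) (B K : ℝ) (hK : 0 ≤ K)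
    (hB : ∀ e, B ≤ u e) (h : ∀ e, u (e + 1) ≤ u e + K / (p : ℝ) ^ e) :
    ∃ L, Filter.Tendsto u Filter.atTop (nhds L) := by
  have hp0 : (0 : ℝ) < p := by exact_mod_cast (by omega : 0 < p)
  have hanti : Antitone (fun e => u e + 2 * K / (p : ℝ) ^ e) := by
    refine antitone_nat_of_succ_le fun e => ?_
    have := tail_step p hp K hK e
    have := h e
    linarith
  have hb : BddBelow (Set.range (fun e => u e + 2 * K / (p : ℝ) ^ e)) := by
    refine ⟨B, ?_⟩
    rintro _ ⟨e, rfl⟩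
    have : 0 ≤ 2 * K / (p : ℝ) ^ e := by positivity
    have := hB e
    linarith
  have h1 := tendsto_atTop_ciInf hanti hb
  have h2 := h1.sub (tendsto_inv_pow p hp (2 * K))
  refine ⟨_, h2.congr fun e => ?_⟩
  simp

lemma conv_of_ratio (p : ℕ) (hp : 2 ≤ p) (u : ℕ → ℝ) (B K ρ : ℝ) (hK : 0 ≤ K)
    (h0 : ∀ e, 0 ≤ u e) (hB : ∀ e, u e ≤ B)
    (h : ∀ e, |u (e + 1) - ρ * u e| ≤ K / (p : ℝ) ^ e) :
    ∃ L, Filter.Tendsto u Filter.atTop (nhds L) := by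
  rcases le_total ρ 1 with hρ | hρ
  · refine conv_of_le p hp u 0 K hK h0 fun e => ?_
    have := (abs_le.1 (h e)).2
    nlinarith [h0 e]
  · obtain ⟨L, hL⟩ := conv_of_le p hp (fun e => - u e) (-B) K hK
      (fun e => by simpa using hB e) (fun e => by
        have := (abs_le.1 (h e)).1
        nlinarith [h0 e])
    exact ⟨-L, by simpa using hL.neg⟩

/-! ### Lengths of `M / 𝔞 M` -/

section Length

variable {C : Type*} [CommRing C]

/-- The length of `M / 𝔞 M`. -/
noncomputable def qlen (𝔞 : Ideal C) (M : Type*) [AddCommGroup M] [Module C M] : ℕ∞ :=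
  Module.length C ((C ⧸ 𝔞) ⊗[C] M)

variable (𝔞 : Ideal C) {M N : Type*} [AddCommGroup M] [Module C M] [AddCommGroup N] [Module C N]

lemma qlen_eq_quot : qlen 𝔞 M = Module.length C (M ⧸ (𝔞 • (⊤ : Submodule C M))) :=
  (TensorProduct.quotTensorEquivQuotSMul M 𝔞).length_eq

lemma qlen_congr (f : M ≃ₗ[C] N) : qlen 𝔞 M = qlen 𝔞 N :=
  (f.lTensor (C ⧸ 𝔞)).length_eq

lemma qlen_le_of_surjective (f : M →ₗ[C] N) (hf : Function.Surjective f) :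
    qlen 𝔞 N ≤ qlen 𝔞 M :=
  Module.length_le_of_surjective (f.lTensor (C ⧸ 𝔞)) (LinearMap.lTensor_surjective _ hf)

lemma qlen_le_add (f : M →ₗ[C] N) :
    qlen 𝔞 N ≤ qlen 𝔞 M + qlen 𝔞 (N ⧸ LinearMap.range f) := by
  have hex : Function.Exact (f.lTensor (C ⧸ 𝔞)) ((LinearMap.range f).mkQ.lTensor (C ⧸ 𝔞)) :=
    lTensor_exact _ (LinearMap.exact_map_mkQ_range f) (Submodule.mkQ_surjective _)
  have h2 := LinearMap.lTensor_surjective (C ⧸ 𝔞) (LinearMap.range f).mkQ_surjective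
  let S : Submodule C ((C ⧸ 𝔞) ⊗[C] N) := LinearMap.range (f.lTensor (C ⧸ 𝔞))
  have hex' : Function.Exact S.subtype ((LinearMap.range f).mkQ.lTensor (C ⧸ 𝔞)) := by
    rw [LinearMap.exact_iff, Submodule.range_subtype]
    exact (LinearMap.exact_iff.1 hex)
  have h : Module.length C ((C ⧸ 𝔞) ⊗[C] N) = Module.length C S +
      Module.length C ((C ⧸ 𝔞) ⊗[C] (N ⧸ LinearMap.range f)) :=
    Module.length_eq_add_of_exact (R := C) (N := S) S.subtype
    ((LinearMap.range f).mkQ.lTensor (C ⧸ 𝔞)) S.subtype_injective h2 hex'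
  unfold qlen
  rw [h]
  gcongr
  exact Module.length_le_of_surjective (f.lTensor (C ⧸ 𝔞)).rangeRestrict
    (LinearMap.surjective_rangeRestrict _)

lemma qlen_pi {ι : Type*} [Fintype ι] (X : ι → Type*) [∀ i, AddCommGroup (X i)]
    [∀ i, Module C (X i)] : qlen 𝔞 (∀ i, X i) = ∑ i, qlen 𝔞 (X i) := by
  classical
  unfold qlen
  rw [(TensorProduct.piRight C C (C ⧸ 𝔞) X).length_eq, Module.length_pi_of_fintype]

lemma qlen_quot (𝔟 : Ideal C) : qlen 𝔞 (C ⧸ 𝔟) = Module.length C (C ⧸ (𝔟 ⊔ 𝔞)) := by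
  rw [qlen_eq_quot]
  have e : ((C ⧸ 𝔟) ⧸ (𝔞 • (⊤ : Submodule C (C ⧸ 𝔟)))) ≃ₗ[C] (C ⧸ (𝔟 ⊔ 𝔞)) := by
    refine LinearEquiv.trans (Submodule.quotEquivOfEq _ (Submodule.map (Submodule.mkQ 𝔟) 𝔞) ?_)
      (Submodule.quotientQuotientEquivQuotientSup 𝔟 𝔞)
    rw [← Submodule.range_mkQ 𝔟, ← Submodule.map_top, ← Submodule.map_smul'']
    simp
  exact e.length_eq

lemma qlen_self : qlen 𝔞 C = Module.length C (C ⧸ 𝔞) := by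
  rw [qlen, (TensorProduct.rid C (C ⧸ 𝔞)).length_eq]

lemma qlen_anti {𝔞 𝔟 : Ideal C} (h : 𝔞 ≤ 𝔟) : qlen 𝔟 M ≤ qlen 𝔞 M := by
  rw [qlen_eq_quot, qlen_eq_quot]
  exact Module.length_le_of_surjective (Submodule.factor (Submodule.smul_mono_left h))
    (Submodule.factor_surjective _)

lemma length_quot_pow_le (𝔠 : Ideal C) (y : C) (n : ℕ) :
    Module.length C (C ⧸ (𝔠 ⊔ Ideal.span {y ^ n})) ≤
      n * Module.length C (C ⧸ (𝔠 ⊔ Ideal.span {y})) := by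
  induction n with
  | zero =>
    have : Subsingleton (C ⧸ (𝔠 ⊔ Ideal.span {y ^ 0})) := by
      rw [Ideal.Quotient.subsingleton_iff]; simp
    simp
  | succ n ih =>
    have h1 : (𝔠 ⊔ Ideal.span {y ^ (n + 1)}) ≤ (𝔠 ⊔ Ideal.span {y ^ n}) := by
      refine sup_le_sup_left ?_ _
      rw [Ideal.span_singleton_le_span_singleton]
      exact ⟨y, pow_succ _ _⟩
    let g : (C ⧸ (𝔠 ⊔ Ideal.span {y ^ (n + 1)})) →ₗ[C] (C ⧸ (𝔠 ⊔ Ideal.span {y ^ n})) :=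
      Submodule.factor h1
    have hg : Function.Surjective g := Submodule.factor_surjective h1
    let f : (C ⧸ (𝔠 ⊔ Ideal.span {y})) →ₗ[C] (C ⧸ (𝔠 ⊔ Ideal.span {y ^ (n + 1)})) :=
      Submodule.mapQ _ _ (LinearMap.mulLeft C (y ^ n)) (by
        refine sup_le ?_ ?_
        · intro a ha
          exact Submodule.mem_sup_left (Ideal.mul_mem_left _ _ ha)
        · rw [Ideal.span_le, Set.singleton_subset_iff]
          refine Submodule.mem_sup_right ?_
          rw [LinearMap.mulLeft_apply, ← pow_succ]
          exact Ideal.mem_span_singleton_self _)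
    have h := Module.length_eq_add_of_exact (R := C) (LinearMap.ker g).subtype g
      (Submodule.subtype_injective _) hg (by rw [LinearMap.exact_iff, Submodule.range_subtype])
    have hker : LinearMap.ker g ≤ LinearMap.range f := by
      intro x hx
      obtain ⟨x, rfl⟩ := Ideal.Quotient.mk_surjective x
      have hx' : x ∈ 𝔠 ⊔ Ideal.span {y ^ n} := by
        rw [← Ideal.Quotient.eq_zero_iff_mem]; exact hx
      obtain ⟨a, ha, b, hb, rfl⟩ := Submodule.mem_sup.1 hx'
      obtain ⟨c, rfl⟩ := Ideal.mem_span_singleton'.1 hb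
      refine ⟨Ideal.Quotient.mk _ c, ?_⟩
      change Ideal.Quotient.mk _ (y ^ n * c) = _
      rw [Ideal.Quotient.eq]
      refine Submodule.mem_sup_left ?_
      have : y ^ n * c - (a + c * y ^ n) = - a := by ring
      rw [this]
      exact neg_mem ha
    rw [h]
    push_cast
    rw [add_mul, one_mul, add_comm]
    refine add_le_add ih ?_
    refine le_trans (Module.length_le_of_injective (Submodule.inclusion hker)
      (Submodule.inclusion_injective _)) ?_
    exact Module.length_le_of_surjective f.rangeRestrict (LinearMap.surjective_rangeRestrict _)

lemma length_quot_pows_le (q : ℕ) (s : List C) : ∀ (𝔠 : Ideal C),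
    Module.length C (C ⧸ (𝔠 ⊔ Ideal.span ((fun y => y ^ q) '' {y | y ∈ s}))) ≤
      (q ^ s.length : ℕ) * Module.length C (C ⧸ (𝔠 ⊔ Ideal.span {y | y ∈ s})) := by
  induction s with
  | nil =>
    intro 𝔠
    have h : (fun y : C => y ^ q) '' {y | y ∈ ([] : List C)} = {y | y ∈ ([] : List C)} := by simp
    rw [h]
    simp
  | cons y s ih =>
    intro 𝔠
    have e1 : 𝔠 ⊔ Ideal.span ((fun y => y ^ q) '' {z | z ∈ y :: s}) =
        (𝔠 ⊔ Ideal.span {y ^ q}) ⊔ Ideal.span ((fun y => y ^ q) '' {z | z ∈ s}) := by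
      rw [sup_assoc, ← Ideal.span_union]
      congr 2
      ext z
      simp [eq_comm]
    have e2 : 𝔠 ⊔ Ideal.span {z | z ∈ y :: s} =
        (𝔠 ⊔ Ideal.span {z | z ∈ s}) ⊔ Ideal.span {y} := by
      rw [sup_assoc, ← Ideal.span_union]
      congr 2
      ext z
      simp
    have e3 : (𝔠 ⊔ Ideal.span {y ^ q}) ⊔ Ideal.span {z | z ∈ s} =
       (𝔠 ⊔ Ideal.span {z | z ∈ s}) ⊔ Ideal.span {y ^ q} := sup_right_comm _ _ _
    rw [e1, e2]
    refine (ih _).trans ?_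
    rw [e3]
    refine (mul_le_mul_right (length_quot_pow_le _ y q) _).trans (le_of_eq ?_)
    simp only [List.length_cons, pow_succ, Nat.cast_mul]
    rw [mul_assoc]

end Length



section Bound

variable {C : Type*} [CommRing C]

lemma pow_mem_bracketPow {J : Ideal C} {y : C} (hy : y ∈ J) (q : ℕ) : y ^ q ∈ J.bracketPow q :=
  Ideal.subset_span ⟨y, hy, rfl⟩

lemma bracketPow_eq_map (p : ℕ) [Fact p.Prime] [CharP C p] (J : Ideal C) (e : ℕ) :
    J.bracketPow (p ^ e) = J.map (iterateFrobenius C p e) := by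
  unfold Ideal.bracketPow Ideal.map
  congr 1

lemma le_radical_bracketPow (J : Ideal C) (q : ℕ) : J ≤ (J.bracketPow q).radical :=
  fun _ hy => ⟨q, pow_mem_bracketPow hy q⟩

variable [IsLocalRing C] [IsNoetherianRing C]

lemma mem_minimalPrimes_of_radical {I : Ideal C} (h1 : I ≤ maximalIdeal C)
    (h2 : maximalIdeal C ≤ I.radical) : maximalIdeal C ∈ I.minimalPrimes := by
  refine ⟨⟨inferInstance, h1⟩, ?_⟩
  rintro Q ⟨hQ, hIQ⟩ _
  exact h2.trans ((Ideal.IsPrime.radical_le_iff hQ).2 hIQ)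

lemma radical_eq_of_mem_minimalPrimes {I : Ideal C} (h : maximalIdeal C ∈ I.minimalPrimes) :
    maximalIdeal C ≤ I.radical := by
  rw [← Ideal.sInf_minimalPrimes]
  refine le_sInf fun Q hQ => ?_
  exact h.2 ⟨hQ.1.1, hQ.1.2⟩ (le_maximalIdeal hQ.1.1.ne_top)

lemma length_quot_ne_top {I : Ideal C} (h2 : maximalIdeal C ≤ I.radical) :
    Module.length C (C ⧸ I) ≠ ⊤ := by
  by_cases hI : I = ⊤
  · have : Subsingleton (C ⧸ I) := Ideal.Quotient.subsingleton_iff.2 hI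
    simp
  · have := IsLocalRing.quotient_artinian_of_mem_minimalPrimes_of_isLocalRing I
      (mem_minimalPrimes_of_radical (le_maximalIdeal hI) h2)
    rw [Module.length_eq_of_surjective (S := C) (R := C ⧸ I) Ideal.Quotient.mk_surjective]
    exact Module.length_ne_top

lemma qlen_quot_bound (J : Ideal C) (hJ : J.radical = maximalIdeal C) (𝔟 : Ideal C) (t : ℕ)
    (ht : ringKrullDim (C ⧸ 𝔟) ≤ t) :
    ∃ K : ℕ, ∀ q : ℕ, 0 < q → qlen (J.bracketPow q) (C ⧸ 𝔟) ≤ ((K * q ^ t : ℕ) : ℕ∞) := by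
  by_cases hb : 𝔟 = ⊤
  · refine ⟨0, fun q _ => ?_⟩
    rw [qlen_quot]
    have : Subsingleton (C ⧸ (𝔟 ⊔ J.bracketPow q)) := by
      rw [Ideal.Quotient.subsingleton_iff, hb, top_sup_eq]
    simp
  have : Nontrivial (C ⧸ 𝔟) := Ideal.Quotient.nontrivial_iff.2 hb
  have : IsLocalRing (C ⧸ 𝔟) :=
    IsLocalRing.of_surjective' (Ideal.Quotient.mk 𝔟) Ideal.Quotient.mk_surjective
  obtain ⟨s, hs, hcard⟩ :=
    Ideal.exists_finset_card_eq_height_of_isNoetherianRing (maximalIdeal (C ⧸ 𝔟))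
  have hst : s.card ≤ t := by
    have h1 := IsLocalRing.maximalIdeal_height_eq_ringKrullDim (R := C ⧸ 𝔟)
    rw [← hcard] at h1
    rw [← h1] at ht
    exact_mod_cast ht
  have hmem : ∀ y : C, y ∈ maximalIdeal C ↔ Ideal.Quotient.mk 𝔟 y ∈ maximalIdeal (C ⧸ 𝔟) := by
    intro y
    have : IsLocalHom (Ideal.Quotient.mk 𝔟) :=
      IsLocalHom.of_surjective _ Ideal.Quotient.mk_surjective
    rw [mem_maximalIdeal, mem_maximalIdeal, mem_nonunits_iff, mem_nonunits_iff, isUnit_map_iff]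
  obtain ⟨N, hN⟩ : ∃ N, maximalIdeal C ^ N ≤ J :=
    Ideal.exists_pow_le_of_le_radical_of_fg hJ.ge (IsNoetherian.noetherian _)
  let g : (C ⧸ 𝔟) → C := Function.surjInv Ideal.Quotient.mk_surjective
  have hg : ∀ x, Ideal.Quotient.mk 𝔟 (g x) = x := Function.surjInv_eq _
  let l : List C := s.toList.map fun x => g x ^ N
  have hsm : ∀ x ∈ s, g x ∈ maximalIdeal C := by
    intro x hx
    rw [hmem, hg]
    exact hs.1.2 (Ideal.subset_span hx)
  have hlJ : ∀ y ∈ l, y ∈ J := by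
    intro y hy
    obtain ⟨x, hx, rfl⟩ := List.mem_map.1 hy
    exact hN (Ideal.pow_mem_pow (hsm x (by simpa using hx)) N)
  have hrad : maximalIdeal C ≤ (𝔟 ⊔ Ideal.span {y | y ∈ l}).radical := by
    intro x hx
    obtain ⟨n, hn⟩ := radical_eq_of_mem_minimalPrimes hs ((hmem x).1 hx)
    have h1 : Ideal.span (s : Set (C ⧸ 𝔟)) ≤
        ((𝔟 ⊔ Ideal.span {y | y ∈ l}).radical).map (Ideal.Quotient.mk 𝔟) := by
      rw [Ideal.span_le]
      intro z hz
      rw [← hg z]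
      refine Ideal.mem_map_of_mem _ ⟨N, Submodule.mem_sup_right (Ideal.subset_span ?_)⟩
      exact List.mem_map.2 ⟨z, by simpa using hz, rfl⟩
    have h2 := h1 hn
    rw [← map_pow, ← Ideal.mem_comap, Ideal.comap_map_of_surjective _ Ideal.Quotient.mk_surjective,
      ← RingHom.ker_eq_comap_bot, Ideal.mk_ker, sup_eq_left.2] at h2
    · exact Ideal.mem_radical_of_pow_mem h2
    · exact le_sup_left.trans Ideal.le_radical
  obtain ⟨K, hK⟩ := ENat.ne_top_iff_exists.1 (length_quot_ne_top hrad)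
  refine ⟨K, fun q hq => ?_⟩
  rw [qlen_quot]
  have hle : 𝔟 ⊔ Ideal.span ((fun y => y ^ q) '' {y | y ∈ l}) ≤ 𝔟 ⊔ J.bracketPow q := by
    refine sup_le_sup_left ?_ _
    rw [Ideal.span_le]
    rintro _ ⟨y, hy, rfl⟩
    exact pow_mem_bracketPow (hlJ y hy) q
  refine (Module.length_le_of_surjective (Submodule.factor hle)
    (Submodule.factor_surjective hle)).trans ((length_quot_pows_le q l 𝔟).trans ?_)
  rw [← hK, mul_comm]
  have hl : l.length = s.card := by simp [l]
  rw [hl]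
  have : q ^ s.card ≤ q ^ t := Nat.pow_le_pow_right hq hst
  exact_mod_cast Nat.mul_le_mul_left K this

lemma qlen_module_bound (J : Ideal C) (hJ : J.radical = maximalIdeal C) (𝔟 : Ideal C) (t : ℕ)
    (ht : ringKrullDim (C ⧸ 𝔟) ≤ t) (M : Type*) [AddCommGroup M] [Module C M] [Module.Finite C M]
    (hM : Module.IsTorsionBySet C M 𝔟) :
    ∃ K : ℕ, ∀ q : ℕ, 0 < q → qlen (J.bracketPow q) M ≤ ((K * q ^ t : ℕ) : ℕ∞) := by
  letI := hM.module
  haveI : IsScalarTower C (C ⧸ 𝔟) M := hM.isScalarTower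
  haveI : Module.Finite (C ⧸ 𝔟) M := Module.Finite.of_restrictScalars_finite C (C ⧸ 𝔟) M
  obtain ⟨n, f, hf⟩ := Module.Finite.exists_fin' (C ⧸ 𝔟) M
  obtain ⟨K, hK⟩ := qlen_quot_bound J hJ 𝔟 t ht
  refine ⟨n * K, fun q hq => ?_⟩
  refine (qlen_le_of_surjective _ (f.restrictScalars C) hf).trans ?_
  rw [qlen_pi]
  refine (Finset.sum_le_sum fun i _ => hK q hq).trans ?_
  simp only [Finset.sum_const, Finset.card_univ, Fintype.card_fin, nsmul_eq_mul]
  rw [mul_assoc]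
  norm_cast

lemma qlen_ne_top (J : Ideal C) (hJ : J.radical = maximalIdeal C) (q : ℕ)
    (M : Type*) [AddCommGroup M] [Module C M] [Module.Finite C M] :
    qlen (J.bracketPow q) M ≠ ⊤ := by
  obtain ⟨n, f, hf⟩ := Module.Finite.exists_fin' C M
  refine ne_top_of_le_ne_top ?_ (qlen_le_of_surjective _ f hf)
  rw [qlen_pi]
  have : qlen (J.bracketPow q) C ≠ ⊤ := by
    rw [qlen_self]
    refine length_quot_ne_top ?_
    rw [← hJ]
    exact Ideal.radical_le_radical_iff.2 (le_radical_bracketPow J q)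
  rw [Finset.sum_const, Finset.card_univ, Fintype.card_fin, nsmul_eq_mul]
  exact WithTop.mul_ne_top (ENat.natCast_ne_top _) this

/-- The normalised Hilbert–Kunz function of a module. -/
noncomputable def hk (J : Ideal C) (p d : ℕ) (M : Type*) [AddCommGroup M] [Module C M]
    (e : ℕ) : ℝ :=
  ((qlen (J.bracketPow (p ^ e)) M).toNat : ℝ) / (p : ℝ) ^ (e * d)

lemma hk_nonneg (J : Ideal C) (p d : ℕ) (M : Type*) [AddCommGroup M] [Module C M]
    (e : ℕ) : 0 ≤ hk J p d M e := by unfold hk; positivity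

variable (J : Ideal C) (hJ : J.radical = maximalIdeal C) (p d : ℕ) [hp : Fact p.Prime]

include hJ in
lemma hk_bounded (hd : ringKrullDim C ≤ d) (M : Type*) [AddCommGroup M] [Module C M]
    [Module.Finite C M] : ∃ K : ℝ, ∀ e, hk J p d M e ≤ K := by
  have hd' : ringKrullDim (C ⧸ (⊥ : Ideal C)) ≤ d := (ringKrullDim_quotient_le _).trans hd
  obtain ⟨K, hK⟩ := qlen_module_bound J hJ ⊥ d hd' M (by
    rintro x ⟨a, ha⟩
    rw [SetLike.mem_coe, Ideal.mem_bot] at ha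
    simp [ha])
  refine ⟨K, fun e => ?_⟩
  have hpp : 0 < p := hp.out.pos
  have h1 := ENat.toNat_le_toNat (hK (p ^ e) (pow_pos hpp e)) (ENat.natCast_ne_top _)
  rw [ENat.toNat_natCast] at h1
  unfold hk
  rw [div_le_iff₀ (by positivity), pow_mul]
  exact_mod_cast h1

include hJ in
lemma hk_small (𝔟 : Ideal C) (hd : ringKrullDim (C ⧸ 𝔟) + 1 ≤ d) (M : Type*) [AddCommGroup M]
    [Module C M] [Module.Finite C M] (hM : Module.IsTorsionBySet C M 𝔟) :
    ∃ K : ℝ, 0 ≤ K ∧ ∀ e, hk J p d M e ≤ K / (p : ℝ) ^ e := by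
  have hpp : 0 < p := hp.out.pos
  cases d with
  | zero =>
    have hb : 𝔟 = ⊤ := by
      by_contra hb
      have : Nontrivial (C ⧸ 𝔟) := Ideal.Quotient.nontrivial_iff.2 hb
      have h0 : (0 : WithBot ℕ∞) ≤ ringKrullDim (C ⧸ 𝔟) := ringKrullDim_nonneg_of_nontrivial
      have h1 : (0 : WithBot ℕ∞) + 1 ≤ 0 := (add_le_add_left h0 1).trans (by simpa using hd)
      rw [zero_add] at h1
      exact absurd h1 (not_le.2 zero_lt_one)
    refine ⟨0, le_rfl, fun e => ?_⟩
    have : Subsingleton M := by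
      refine ⟨fun a b => ?_⟩
      have h1 : ∀ a : M, a = 0 := fun a => by
        simpa using @hM a ⟨1, by rw [hb]; trivial⟩
      rw [h1 a, h1 b]
    have : Subsingleton ((C ⧸ J.bracketPow (p ^ e)) ⊗[C] M) := inferInstance
    simp [hk, qlen]
  | succ t =>
    have ht : ringKrullDim (C ⧸ 𝔟) ≤ t := by
      rw [Nat.cast_add, Nat.cast_one] at hd
      exact ENat.WithBot.add_le_add_one_right_iff.1 hd
    obtain ⟨K, hK⟩ := qlen_module_bound J hJ 𝔟 t ht M hM
    refine ⟨K, by positivity, fun e => ?_⟩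
    have h1 := ENat.toNat_le_toNat (hK (p ^ e) (pow_pos hpp e)) (ENat.natCast_ne_top _)
    rw [ENat.toNat_natCast] at h1
    unfold hk
    rw [div_le_div_iff₀ (by positivity) (by positivity), mul_add, mul_one, pow_add, ← mul_assoc]
    refine mul_le_mul_of_nonneg_right ?_ (by positivity)
    rw [pow_mul]
    exact_mod_cast h1

include hJ in
lemma hk_le_add (e : ℕ) {M N : Type*} [AddCommGroup M] [Module C M] [Module.Finite C M]
    [AddCommGroup N] [Module C N] [Module.Finite C N] (f : M →ₗ[C] N) :
    hk J p d N e ≤ hk J p d M e + hk J p d (N ⧸ LinearMap.range f) e := by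
  have h := qlen_le_add (J.bracketPow (p ^ e)) f
  have h1 := ENat.toNat_le_toNat h (by
    exact WithTop.add_ne_top.2 ⟨qlen_ne_top J hJ _ M, qlen_ne_top J hJ _ _⟩)
  rw [ENat.toNat_add (qlen_ne_top J hJ _ M) (qlen_ne_top J hJ _ _)] at h1
  unfold hk
  rw [← add_div]
  gcongr
  exact_mod_cast h1

include hJ in
lemma hk_pi (e : ℕ) {ι : Type*} [Fintype ι] (X : ι → Type*) [∀ i, AddCommGroup (X i)]
    [∀ i, Module C (X i)] [∀ i, Module.Finite C (X i)] :
    hk J p d (∀ i, X i) e = ∑ i, hk J p d (X i) e := by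
  unfold hk
  rw [qlen_pi, ← Finset.sum_div, ENat.toNat_sum fun i _ => qlen_ne_top J hJ _ (X i)]
  push_cast
  rfl

lemma hk_congr (e : ℕ) {M N : Type*} [AddCommGroup M] [Module C M]
    [AddCommGroup N] [Module C N] (f : M ≃ₗ[C] N) : hk J p d M e = hk J p d N e := by
  unfold hk
  rw [qlen_congr _ f]

/-- `𝔟` is contained in no minimal prime, so `C/𝔟` has smaller dimension. -/
lemma ringKrullDim_quot_succ_le {R : Type*} [CommRing R] (𝔟 : Ideal R)
    (h : ∀ P ∈ minimalPrimes R, ¬ 𝔟 ≤ P) : ringKrullDim (R ⧸ 𝔟) + 1 ≤ ringKrullDim R := by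
  by_cases hr' : 𝔟 = ⊤
  · subst hr'
    rw [ringKrullDim_eq_bot_of_subsingleton]
    simp
  have : Nonempty (PrimeSpectrum.zeroLocus (R := R) 𝔟) := by
    rwa [Set.nonempty_coe_sort, Set.nonempty_iff_ne_empty, ne_eq,
      PrimeSpectrum.zeroLocus_empty_iff_eq_top]
  have := Ideal.Quotient.nontrivial_iff.mpr hr'
  have := (Ideal.Quotient.mk 𝔟).domain_nontrivial
  rw [ringKrullDim_quotient, Order.krullDim_eq_iSup_length, ringKrullDim,
    Order.krullDim_eq_iSup_length, ← WithBot.coe_one, ← WithBot.coe_add,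
    ENat.iSup_add, WithBot.coe_le_coe, iSup_le_iff]
  intro l
  obtain ⟨p, hp, hp'⟩ := Ideal.exists_minimalPrimes_le (J := l.head.1.asIdeal) bot_le
  let p' : PrimeSpectrum R := ⟨p, hp.1.1⟩
  have hp' : p' < l.head.1 := lt_of_le_of_ne hp' fun h' ↦ h p hp (by
    have h1 : (𝔟 : Set R) ⊆ l.head.1.asIdeal := l.head.2
    rw [← h'] at h1
    exact h1)
  have hmono : StrictMono (Subtype.val : PrimeSpectrum.zeroLocus (R := R) 𝔟 → PrimeSpectrum R) :=
    fun _ _ h => h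
  have h2 := le_iSup (fun s : LTSeries (PrimeSpectrum R) => (s.length : ℕ∞))
    (RelSeries.cons (l.map Subtype.val hmono) p' hp')
  refine le_trans ?_ h2
  have h3 : (RelSeries.cons (l.map Subtype.val hmono) p' hp').length = l.length + 1 := by
    exact RelSeries.cons_length (l.map Subtype.val hmono) p' hp'
  rw [h3]
  push_cast
  exact le_rfl

end Bound



section Push

lemma qlen_restrict {A B : Type*} [CommRing A] [CommRing B] [IsLocalRing A] [IsLocalRing B]
    [Algebra A B] [IsLocalHom (algebraMap A B)]
    (hsurj : Function.Surjective (algebraMap (ResidueField A) (ResidueField B)))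
    (X : Type*) [AddCommGroup X] [Module A X] [Module B X] [IsScalarTower A B X] (𝔞 : Ideal A) :
    qlen 𝔞 X = qlen (𝔞.map (algebraMap A B)) X := by
  rw [qlen_eq_quot, qlen_eq_quot]
  have h1 : Module.length (ResidueField A) (ResidueField B) = 1 := by
    rw [Module.length_eq_of_surjective hsurj]
    exact Module.length_eq_one _ _
  have h2 := IsLocalRing.length_restrictScalars A B
    (X ⧸ (𝔞.map (algebraMap A B) • (⊤ : Submodule B X)))
  rw [h1, mul_one] at h2
  rw [← h2]
  have h3 : 𝔞 • (⊤ : Submodule A X) =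
      (𝔞.map (algebraMap A B) • (⊤ : Submodule B X)).restrictScalars A := by
    rw [Ideal.smul_restrictScalars, Submodule.restrictScalars_top]
  refine LinearEquiv.length_eq ?_
  exact (Submodule.quotEquivOfEq _ _ h3).trans
    (Submodule.Quotient.restrictScalarsEquiv A (𝔞.map (algebraMap A B) • (⊤ : Submodule B X)))

variable {C : Type*} [CommRing C]

/-- The ring `C` viewed as an algebra over itself through `φ`. -/
def PushRing (_φ : C →+* C) : Type _ := C

instance (φ : C →+* C) : CommRing (PushRing φ) := inferInstanceAs (CommRing C)
instance (φ : C →+* C) [IsLocalRing C] : IsLocalRing (PushRing φ) :=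
  inferInstanceAs (IsLocalRing C)
instance (φ : C →+* C) : Algebra C (PushRing φ) := RingHom.toAlgebra (S := PushRing φ) φ

/-- The module `X` viewed as a module through `φ`. -/
def Push (_φ : C →+* C) (X : Type*) : Type _ := X

instance (φ : C →+* C) (X : Type*) [AddCommGroup X] : AddCommGroup (Push φ X) :=
  inferInstanceAs (AddCommGroup X)

instance (φ : C →+* C) (X : Type*) [AddCommGroup X] [h : Module C X] :
    Module (PushRing φ) (Push φ X) := h

instance (φ : C →+* C) (X : Type*) [AddCommGroup X] [Module C X] : Module C (Push φ X) :=
  Module.compHom (Push φ X) (algebraMap C (PushRing φ))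

instance (φ : C →+* C) (X : Type*) [AddCommGroup X] [Module C X] :
    IsScalarTower C (PushRing φ) (Push φ X) := by
  refine ⟨fun a b x => ?_⟩
  rw [Algebra.smul_def, mul_smul]
  rfl

lemma push_smul (φ : C →+* C) (X : Type*) [AddCommGroup X] [Module C X] (c : C) (x : Push φ X) :
    (c • x : Push φ X) = (show Push φ X from (φ c • (show X from x) : X)) := rfl

lemma push_finite (φ : C →+* C) (hφ : φ.Finite) (X : Type*) [AddCommGroup X] [Module C X]
    [h : Module.Finite C X] : Module.Finite C (Push φ X) := by
  haveI : Module.Finite (PushRing φ) (Push φ X) := h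
  haveI : Module.Finite C (PushRing φ) := hφ
  exact Module.Finite.trans (PushRing φ) (Push φ X)

lemma qlen_push [IsLocalRing C] (φ : C →+* C) [hloc : IsLocalHom φ]
    (hsurj : Function.Surjective (ResidueField.map φ)) (X : Type*) [AddCommGroup X] [Module C X]
    (𝔞 : Ideal C) : qlen 𝔞 (Push φ X) = qlen (𝔞.map φ) X := by
  haveI : IsLocalHom (algebraMap C (PushRing φ)) := hloc
  exact qlen_restrict (A := C) (B := PushRing φ) hsurj (Push φ X) 𝔞

variable [IsLocalRing C] (p : ℕ) [hp : Fact p.Prime] [CharP C p]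

instance isLocalHom_iterateFrobenius (k : ℕ) : IsLocalHom (iterateFrobenius C p k) := by
  refine ⟨fun a ha => ?_⟩
  rw [iterateFrobenius_def] at ha
  exact (isUnit_pow_iff (pow_ne_zero k hp.out.ne_zero)).1 ha

omit hp [CharP C p] in
lemma residue_surjective_pow [Fact p.Prime] [CharP C p]
    (hperf : ∀ x : ResidueField C, ∃ y, y ^ p = x) (k : ℕ) :
    Function.Surjective (ResidueField.map (iterateFrobenius C p k)) := by
  have h1 : ∀ x : ResidueField C, ∃ y, y ^ p ^ k = x := by
    induction k with
    | zero => intro x; exact ⟨x, by simp⟩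
    | succ k ih =>
      intro x
      obtain ⟨y, hy⟩ := hperf x
      obtain ⟨z, hz⟩ := ih y
      exact ⟨z, by rw [pow_succ, pow_mul, hz, hy]⟩
  intro x
  obtain ⟨y, hy⟩ := h1 x
  obtain ⟨y, rfl⟩ := residue_surjective y
  refine ⟨residue C y, ?_⟩
  rw [ResidueField.map_residue, iterateFrobenius_def, map_pow]
  exact hy

lemma iterateFrobenius_finite (hF : (frobenius C p).Finite) (k : ℕ) :
    (iterateFrobenius C p k).Finite := by
  induction k with
  | zero =>
    have : iterateFrobenius C p 0 = RingHom.id C := by ext; simp [iterateFrobenius_def]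
    rw [this]; exact RingHom.Finite.id C
  | succ k ih =>
    have : iterateFrobenius C p (k + 1) = (frobenius C p).comp (iterateFrobenius C p k) := by
      ext x; simp [iterateFrobenius_def, frobenius_def, pow_succ, pow_mul]
    rw [this]
    exact hF.comp ih

lemma hk_push (hperf : ∀ x : ResidueField C, ∃ y, y ^ p = x) (J : Ideal C) (d k : ℕ)
    (X : Type*) [AddCommGroup X] [Module C X] (e : ℕ) :
    hk J p d (Push (iterateFrobenius C p k) X) e = (p : ℝ) ^ (k * d) * hk J p d X (e + k) := by
  unfold hk
  rw [qlen_push _ (residue_surjective_pow p hperf k), bracketPow_eq_map, bracketPow_eq_map,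
    Ideal.map_map]
  have h1 : (iterateFrobenius C p k).comp (iterateFrobenius C p e) =
      iterateFrobenius C p (e + k) := by
    ext x; simp [iterateFrobenius_def, pow_add, pow_mul]
  rw [h1, add_mul, pow_add]
  have : (p : ℝ) ≠ 0 := by exact_mod_cast hp.out.ne_zero
  field_simp

end Push


section FFinite

lemma generic_free {D M : Type*} [CommRing D] [IsDomain D] [AddCommGroup M] [Module D M]
    [Module.Finite D M] : ∃ (n : ℕ) (s : Set (Fin n)) (f : (s → D) →ₗ[D] M) (g : M →ₗ[D] (s → D))
      (c : D), c ≠ 0 ∧ (∀ m, ∃ x, f x = c • m) ∧ ∀ y, ∃ m, g m = c • y := by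
  classical
  obtain ⟨n, v, hv⟩ := Module.Finite.exists_fin (R := D) (M := M)
  obtain ⟨s, hs, hmax⟩ := exists_maximal_linearIndepOn D v
  have hex : ∀ i, ∃ a : D, a ≠ 0 ∧ a • v i ∈ Submodule.span D (v '' s) := by
    intro i
    by_cases hi : i ∈ s
    · exact ⟨1, one_ne_zero, by
        rw [one_smul]; exact Submodule.subset_span ⟨i, hi, rfl⟩⟩
    · exact hmax i hi
  choose a ha0 ha using hex
  have hrange : Set.range (fun i : s => v i) = v '' s := by ext; simp
  have hs' : LinearIndependent D (fun i : s => v i) := hs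
  have hc : ∀ m : M, (∏ i, a i) • m ∈ Submodule.span D (Set.range (fun i : s => v i)) := by
    intro m
    rw [hrange]
    have hm : m ∈ Submodule.span D (Set.range v) := by rw [hv]; trivial
    induction hm using Submodule.span_induction with
    | mem x hx =>
      obtain ⟨i, rfl⟩ := hx
      rw [← Finset.prod_erase_mul _ _ (Finset.mem_univ i), mul_smul]
      exact Submodule.smul_mem _ _ (ha i)
    | zero => simp
    | add x y _ _ hx hy => rw [smul_add]; exact add_mem hx hy
    | smul r x _ hx => rw [smul_comm]; exact Submodule.smul_mem _ _ hx
  let E : (s →₀ D) ≃ₗ[D] (s → D) := Finsupp.linearEquivFunOnFinite D D s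
  let cm : M →ₗ[D] Submodule.span D (Set.range (fun i : s => v i)) :=
    LinearMap.codRestrict _ (LinearMap.lsmul D M (∏ i, a i)) hc
  refine ⟨n, s, (Finsupp.linearCombination D (fun i : s => v i)) ∘ₗ E.symm.toLinearMap,
    E.toLinearMap ∘ₗ hs'.repr ∘ₗ cm, ∏ i, a i, Finset.prod_ne_zero_iff.2 fun i _ => ha0 i, ?_, ?_⟩
  · intro m
    refine ⟨E (hs'.repr (cm m)), ?_⟩
    simp only [LinearMap.comp_apply, LinearEquiv.coe_coe, LinearEquiv.symm_apply_apply]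
    rw [hs'.linearCombination_repr]
    rfl
  · intro y
    refine ⟨Finsupp.linearCombination D (fun i : s => v i) (E.symm y), ?_⟩
    have h1 : hs'.repr (cm (Finsupp.linearCombination D (fun i : s => v i) (E.symm y))) =
        (∏ i, a i) • E.symm y := by
      apply hs'.repr_eq
      rw [map_smul]
      rfl
    simp only [LinearMap.comp_apply, LinearEquiv.coe_coe]
    rw [h1, map_smul, LinearEquiv.apply_symm_apply]

/-- sequences which are `O(1/p^e)`. -/
def Sm (p : ℕ) (f : ℕ → ℝ) : Prop := ∃ K : ℝ, 0 ≤ K ∧ ∀ e, |f e| ≤ K / (p : ℝ) ^ e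

lemma Sm.add {p : ℕ} {f g : ℕ → ℝ} (hf : Sm p f) (hg : Sm p g) : Sm p (fun e => f e + g e) := by
  obtain ⟨K, hK, h⟩ := hf
  obtain ⟨L, hL, h'⟩ := hg
  refine ⟨K + L, add_nonneg hK hL, fun e => ?_⟩
  rw [add_div]
  exact (abs_add_le _ _).trans (add_le_add (h e) (h' e))

lemma Sm.sum {p : ℕ} {ι : Type*} (s : Finset ι) (f : ι → ℕ → ℝ) (hf : ∀ i ∈ s, Sm p (f i)) :
    Sm p (fun e => ∑ i ∈ s, f i e) := by
  classical
  induction s using Finset.induction_on with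
  | empty => exact ⟨0, le_rfl, fun e => by simp⟩
  | insert a s ha ih =>
    simp only [Finset.sum_insert ha]
    exact (hf a (by simp)).add (ih fun i hi => hf i (by simp [hi]))

lemma Sm.tendsto {p : ℕ} (hp : 2 ≤ p) {f : ℕ → ℝ} (hf : Sm p f) : Tendsto f atTop (𝓝 0) := by
  obtain ⟨K, hK, h⟩ := hf
  have h1 : Tendsto (fun e : ℕ => K / (p : ℝ) ^ e) atTop (𝓝 0) :=
    tendsto_const_nhds.div_atTop
      (tendsto_pow_atTop_atTop_of_one_lt (by exact_mod_cast (by omega : 1 < p)))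
  exact squeeze_zero_norm h h1

variable {C : Type*} [CommRing C] [IsLocalRing C] [IsNoetherianRing C]
variable (J : Ideal C) (hJ : J.radical = maximalIdeal C) (p d : ℕ) [hp : Fact p.Prime]
  (hd : ringKrullDim C ≤ d)

include hJ hd in
lemma sm_diff {M N : Type*} [AddCommGroup M] [Module C M] [Module.Finite C M]
    [AddCommGroup N] [Module C N] [Module.Finite C N] (f : M →ₗ[C] N) (g : N →ₗ[C] M)
    (𝔟 : Ideal C) (hb : ∀ P ∈ minimalPrimes C, ¬ 𝔟 ≤ P)
    (hf : ∀ b ∈ 𝔟, ∀ n, ∃ x, f x = b • n) (hg : ∀ b ∈ 𝔟, ∀ m, ∃ x, g x = b • m) :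
    Sm p (fun e => hk J p d M e - hk J p d N e) := by
  have hdim := (ringKrullDim_quot_succ_le 𝔟 hb).trans hd
  obtain ⟨K, hK, h⟩ := hk_small J hJ p d 𝔟 hdim (N ⧸ LinearMap.range f) (by
    intro x ⟨b, hb⟩
    obtain ⟨n, rfl⟩ := Submodule.mkQ_surjective _ x
    change b • (LinearMap.range f).mkQ n = 0
    rw [← map_smul, Submodule.mkQ_apply, Submodule.Quotient.mk_eq_zero]
    exact hf b hb n)
  obtain ⟨L, hL, h'⟩ := hk_small J hJ p d 𝔟 hdim (M ⧸ LinearMap.range g) (by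
    intro x ⟨b, hb⟩
    obtain ⟨n, rfl⟩ := Submodule.mkQ_surjective _ x
    change b • (LinearMap.range g).mkQ n = 0
    rw [← map_smul, Submodule.mkQ_apply, Submodule.Quotient.mk_eq_zero]
    exact hg b hb n)
  refine ⟨K + L, add_nonneg hK hL, fun e => ?_⟩
  have h1 := hk_le_add J hJ p d e f
  have h2 := hk_le_add J hJ p d e g
  have h3 := h e
  have h4 := h' e
  have hpp : (0 : ℝ) < p := by exact_mod_cast hp.out.pos
  have h5 : 0 ≤ K / (p : ℝ) ^ e := by positivity
  have h6 : 0 ≤ L / (p : ℝ) ^ e := by positivity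
  rw [add_div, abs_le]
  constructor <;> linarith

include hJ hd in
lemma sm_prime (P : Ideal C) (hP : P ∈ minimalPrimes C) (M : Type*) [AddCommGroup M] [Module C M]
    [Module.Finite C M] (hM : Module.IsTorsionBySet C M P) :
    ∃ r : ℝ, Sm p (fun e => hk J p d M e - r * hk J p d (C ⧸ P) e) := by
  have hPp : P.IsPrime := hP.1.1
  letI := hM.module
  haveI : IsScalarTower C (C ⧸ P) M := hM.isScalarTower
  haveI : Module.Finite (C ⧸ P) M := Module.Finite.of_restrictScalars_finite C (C ⧸ P) M
  obtain ⟨n, s, f, g, c, hc, hf, hg⟩ := generic_free (D := C ⧸ P) (M := M)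
  classical
  obtain ⟨c, rfl⟩ := Ideal.Quotient.mk_surjective c
  have hcP : c ∉ P := fun h => hc (Ideal.Quotient.eq_zero_iff_mem.2 h)
  refine ⟨(Fintype.card s : ℝ), ?_⟩
  have h1 : ∀ e, (Fintype.card s : ℝ) * hk J p d (C ⧸ P) e = hk J p d (s → C ⧸ P) e := by
    intro e
    rw [hk_pi J hJ p d e (fun _ : s => C ⧸ P), Finset.sum_const, nsmul_eq_mul, Finset.card_univ]
  simp only [h1]
  have hmk : ∀ b ∈ P ⊔ Ideal.span {c}, ∃ a : C ⧸ P,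
      Ideal.Quotient.mk P b = Ideal.Quotient.mk P c * a := by
    intro b hb
    obtain ⟨x, hx, y, hy, rfl⟩ := Submodule.mem_sup.1 hb
    obtain ⟨z, rfl⟩ := Ideal.mem_span_singleton'.1 hy
    refine ⟨Ideal.Quotient.mk P z, ?_⟩
    rw [map_add, Ideal.Quotient.eq_zero_iff_mem.2 hx, zero_add, map_mul, mul_comm]
  refine sm_diff J hJ p d hd (g.restrictScalars C) (f.restrictScalars C) (P ⊔ Ideal.span {c})
    ?_ ?_ ?_
  · intro Q hQ hle
    have h2 : Q ≤ P := hQ.2 ⟨hPp, bot_le⟩ (le_sup_left.trans hle)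
    exact hcP (h2 (hle (Submodule.mem_sup_right (Ideal.mem_span_singleton_self c))))
  · intro b hb y
    obtain ⟨a, ha⟩ := hmk b hb
    obtain ⟨m, hm⟩ := hg (a • y)
    refine ⟨m, ?_⟩
    rw [LinearMap.restrictScalars_apply, hm, ← mul_smul, ← ha]
    exact (algebraMap_smul (C ⧸ P) b y)
  · intro b hb y
    obtain ⟨a, ha⟩ := hmk b hb
    obtain ⟨m, hm⟩ := hf (a • y)
    refine ⟨m, ?_⟩
    rw [LinearMap.restrictScalars_apply, hm, ← mul_smul, ← ha]
    exact (algebraMap_smul (C ⧸ P) b y)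

variable [CharP C p] (hperf : ∀ x : ResidueField C, ∃ y, y ^ p = x) (hF : (frobenius C p).Finite)

include hJ hd hperf hF in
lemma conv_prime (P : Ideal C) (hP : P ∈ minimalPrimes C) :
    ∃ L, Tendsto (hk J p d (C ⧸ P)) atTop (𝓝 L) := by
  haveI := push_finite _ (iterateFrobenius_finite p hF 1) (C ⧸ P)
  obtain ⟨r, K, hK, h⟩ := sm_prime J hJ p d hd P hP (Push (iterateFrobenius C p 1) (C ⧸ P)) (by
    rintro x ⟨a, ha⟩
    change iterateFrobenius C p 1 a • (show C ⧸ P from x) = 0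
    obtain ⟨y, rfl⟩ := Ideal.Quotient.mk_surjective (show C ⧸ P from x)
    rw [Algebra.smul_def, Ideal.Quotient.algebraMap_eq, ← map_mul, Ideal.Quotient.eq_zero_iff_mem]
    refine P.mul_mem_right _ ?_
    rw [iterateFrobenius_one]
    exact Ideal.pow_mem_of_mem _ ha _ hp.out.pos)
  obtain ⟨B, hB⟩ := hk_bounded J hJ p d hd (C ⧸ P)
  have hpp : (0 : ℝ) < p := by exact_mod_cast hp.out.pos
  refine conv_of_ratio p hp.out.two_le _ B (K / (p : ℝ) ^ d) (r / (p : ℝ) ^ d) (by positivity)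
    (fun e => hk_nonneg _ _ _ _ _) hB fun e => ?_
  have h1 := h e
  beta_reduce at h1
  rw [hk_push p hperf J d 1] at h1
  have h2 : hk J p d (C ⧸ P) (e + 1) - r / (p : ℝ) ^ d * hk J p d (C ⧸ P) e =
      ((p : ℝ) ^ (1 * d) * hk J p d (C ⧸ P) (e + 1) - r * hk J p d (C ⧸ P) e) / (p : ℝ) ^ d := by
    rw [one_mul]; field_simp
  rw [h2, abs_div, abs_of_pos (pow_pos hpp d), div_right_comm]
  gcongr

include hJ hd in
lemma sm_sum (N : Type*) [AddCommGroup N] [Module C N] [Module.Finite C N]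
    (hN : Module.IsTorsionBySet C N (nilradical C)) [Fintype (minimalPrimes C)] :
    Sm p (fun e => hk J p d N e - ∑ P : minimalPrimes C,
      hk J p d (N ⧸ (P.1 • (⊤ : Submodule C N))) e) := by
  classical
  have hpr : ∀ P : minimalPrimes C, P.1.IsPrime := fun P => P.2.1.1
  have hex : ∀ P : minimalPrimes C, ∃ c : C, c ∉ P.1 ∧ ∀ Q : minimalPrimes C, Q ≠ P → c ∈ Q.1 := by
    intro P
    have h1 : ¬ ((Finset.univ.erase P).inf fun Q : minimalPrimes C => Q.1) ≤ P.1 := by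
      intro h
      obtain ⟨Q, hQ, hQP⟩ := (Ideal.IsPrime.inf_le' (hpr P)).1 h
      refine (Finset.ne_of_mem_erase hQ) (Subtype.ext (le_antisymm hQP ?_))
      exact P.2.2 ⟨hpr Q, bot_le⟩ hQP
    obtain ⟨c, hc, hcP⟩ := SetLike.not_le_iff_exists.1 h1
    refine ⟨c, hcP, fun Q hQ => ?_⟩
    exact (Finset.inf_le (f := fun Q : minimalPrimes C => Q.1)
      (Finset.mem_erase.2 ⟨hQ, Finset.mem_univ Q⟩)) hc
  choose c hc hc' using hex
  have hcN : ∀ P : minimalPrimes C, ∀ a ∈ P.1, ∀ n : N, (c P * a) • n = 0 := by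
    intro P a ha n
    refine @hN n ⟨c P * a, ?_⟩
    rw [SetLike.mem_coe, nilradical, Ideal.zero_eq_bot, ← Ideal.sInf_minimalPrimes,
      Submodule.mem_sInf]
    intro Q hQ
    by_cases h : (⟨Q, hQ⟩ : minimalPrimes C) = P
    · subst h; exact Ideal.mul_mem_left _ _ ha
    · exact Ideal.mul_mem_right _ _ (hc' P ⟨Q, hQ⟩ h)
  have hker : ∀ P : minimalPrimes C, P.1 • (⊤ : Submodule C N) ≤
      LinearMap.ker (LinearMap.lsmul C N (c P)) := by
    intro P
    rw [Submodule.smul_le]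
    intro a ha n _
    rw [LinearMap.mem_ker, LinearMap.lsmul_apply, ← mul_smul]
    exact hcN P a ha n
  let F : N →ₗ[C] (∀ P : minimalPrimes C, N ⧸ (P.1 • (⊤ : Submodule C N))) :=
    LinearMap.pi fun P => Submodule.mkQ _
  let G : (∀ P : minimalPrimes C, N ⧸ (P.1 • (⊤ : Submodule C N))) →ₗ[C] N :=
    ∑ P : minimalPrimes C, (Submodule.liftQ _ _ (hker P)) ∘ₗ LinearMap.proj P
  have hGF : ∀ n, G (F n) = (∑ P, c P) • n := by
    intro n
    simp only [G, F, LinearMap.sum_apply, LinearMap.comp_apply, LinearMap.proj_apply,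
      LinearMap.pi_apply, Submodule.mkQ_apply, Submodule.liftQ_apply, LinearMap.lsmul_apply]
    rw [Finset.sum_smul]
  have hFG : ∀ y, F (G y) = (∑ P, c P) • y := by
    intro y
    have hsurj : ∀ P : minimalPrimes C, ∃ n : N,
        (P.1 • (⊤ : Submodule C N)).mkQ n = y P := fun P => Submodule.mkQ_surjective _ (y P)
    choose n hn using hsurj
    have hy : y = fun P => (P.1 • (⊤ : Submodule C N)).mkQ (n P) := (funext hn).symm
    have hG : G y = ∑ P, c P • n P := by
      rw [hy]
      simp only [G, LinearMap.sum_apply, LinearMap.comp_apply, LinearMap.proj_apply,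
        Submodule.mkQ_apply, Submodule.liftQ_apply, LinearMap.lsmul_apply]
    rw [hG, hy]
    funext Q
    change (Q.1 • (⊤ : Submodule C N)).mkQ _ = (∑ P, c P) • (Q.1 • (⊤ : Submodule C N)).mkQ (n Q)
    rw [← map_smul, ← sub_eq_zero, ← map_sub, Submodule.mkQ_apply, Submodule.Quotient.mk_eq_zero,
      Finset.sum_smul, ← Finset.sum_sub_distrib]
    refine Submodule.sum_mem _ fun P _ => ?_
    by_cases h : Q = P
    · subst h; simp
    · rw [← smul_sub]
      exact Submodule.smul_mem_smul (hc' P Q h) trivial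
  have h1 : ∀ e, ∑ P : minimalPrimes C, hk J p d (N ⧸ (P.1 • (⊤ : Submodule C N))) e =
      hk J p d (∀ P : minimalPrimes C, N ⧸ (P.1 • (⊤ : Submodule C N))) e := fun e =>
    (hk_pi J hJ p d e _).symm
  simp only [h1]
  refine sm_diff J hJ p d hd F G (Ideal.span {∑ P, c P}) ?_ ?_ ?_
  · intro P hP hle
    have h2 := hle (Ideal.mem_span_singleton_self _)
    rw [← Finset.add_sum_erase _ _ (Finset.mem_univ (⟨P, hP⟩ : minimalPrimes C))] at h2
    refine hc ⟨P, hP⟩ ((Ideal.add_mem_iff_left _ ?_).1 h2)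
    refine Ideal.sum_mem _ fun Q hQ => hc' Q ⟨P, hP⟩ (Finset.ne_of_mem_erase hQ).symm
  · intro b hb y
    obtain ⟨a, rfl⟩ := Ideal.mem_span_singleton'.1 hb
    exact ⟨G (a • y), by rw [hFG, ← mul_smul, mul_comm]⟩
  · intro b hb y
    obtain ⟨a, rfl⟩ := Ideal.mem_span_singleton'.1 hb
    exact ⟨F (a • y), by rw [hGF, ← mul_smul, mul_comm]⟩

include hJ hd hperf hF in
theorem conv_ffinite : ∃ L, Tendsto (hk J p d C) atTop (𝓝 L) := by
  obtain ⟨k, hk0⟩ := IsNoetherianRing.isNilpotent_nilradical C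
  have hkp : k ≤ p ^ k := (Nat.lt_pow_self hp.out.one_lt).le
  haveI := push_finite _ (iterateFrobenius_finite p hF k) C
  haveI : Fintype (minimalPrimes C) := (minimalPrimes.finite_of_isNoetherianRing C).fintype
  set N := Push (iterateFrobenius C p k) C with hNdef
  have hN : Module.IsTorsionBySet C N (nilradical C) := by
    rintro x ⟨a, ha⟩
    change iterateFrobenius C p k a • (show C from x) = 0
    have h1 : a ^ p ^ k ∈ nilradical C ^ k :=
      Ideal.pow_le_pow_right hkp (Ideal.pow_mem_pow ha _)
    rw [hk0] at h1
    rw [iterateFrobenius_def, (show a ^ p ^ k = 0 from h1), zero_smul]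
  have h1 := sm_sum J hJ p d hd N hN
  have h2 : ∀ P : minimalPrimes C, ∃ r : ℝ, Sm p (fun e =>
      hk J p d (N ⧸ (P.1 • (⊤ : Submodule C N))) e - r * hk J p d (C ⧸ P.1) e) := by
    intro P
    refine sm_prime J hJ p d hd P.1 P.2 _ ?_
    rintro x ⟨a, ha⟩
    obtain ⟨n, rfl⟩ := Submodule.mkQ_surjective _ x
    change a • (P.1 • (⊤ : Submodule C N)).mkQ n = 0
    rw [← map_smul, Submodule.mkQ_apply, Submodule.Quotient.mk_eq_zero]
    exact Submodule.smul_mem_smul ha trivial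
  choose r hr using h2
  have h3 : ∀ P : minimalPrimes C, ∃ L, Tendsto (hk J p d (C ⧸ P.1)) atTop (𝓝 L) :=
    fun P => conv_prime J hJ p d hd hperf hF P.1 P.2
  choose L hL using h3
  have h4 := h1.add (Sm.sum Finset.univ _ fun P _ => hr P)
  have h5 := (h4.tendsto hp.out.two_le).add
    (tendsto_finsetSum Finset.univ fun (P : minimalPrimes C) _ => (hL P).const_mul (r P))
  have h6 : Tendsto (hk J p d N) atTop (𝓝 (0 + ∑ P, r P * L P)) := by
    refine h5.congr fun e => ?_
    rw [Finset.sum_sub_distrib]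
    ring
  have hpp : (0 : ℝ) < p := by exact_mod_cast hp.out.pos
  have h7 := h6.const_mul (((p : ℝ) ^ (k * d))⁻¹)
  refine ⟨_, (tendsto_add_atTop_iff_nat k).1 (h7.congr fun e => ?_)⟩
  have h8 : hk J p d N e = _ := hk_push p hperf J d k C e
  rw [h8]
  field_simp

end FFinite


section FormallySmooth

open Polynomial

lemma lift_square_zero {k B : Type*} [Field k] [CommRing B] (p : ℕ) [hp : Fact p.Prime] [CharP k p]
    [CharP B p] (I : Ideal B) (hI : I ^ 2 = ⊥) (f : k →+* B ⧸ I) :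
    ∃ g : k →+* B, (Ideal.Quotient.mk I).comp g = f := by
  classical
  have hIp : ∀ b ∈ I, frobenius B p b = 0 := by
    intro b hb
    have h1 : b ^ p ∈ I ^ 2 := Ideal.pow_le_pow_right hp.out.two_le (Ideal.pow_mem_pow hb p)
    rw [hI] at h1
    exact h1
  let ψ : k →+* B := (Ideal.Quotient.lift I (frobenius B p) hIp).comp f
  have hψ : ∀ x b, Ideal.Quotient.mk I b = f x → ψ x = b ^ p := by
    intro x b hb
    simp only [ψ, RingHom.comp_apply, ← hb, Ideal.Quotient.lift_mk, frobenius_def]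
  have hψ' : ∀ x, Ideal.Quotient.mk I (ψ x) = f (x ^ p) := by
    intro x
    obtain ⟨b, hb⟩ := Ideal.Quotient.mk_surjective (f x)
    rw [hψ x b hb, map_pow, map_pow, hb]
  let S : Set (Subring (k × B)) := {G | (∀ z ∈ G, Ideal.Quotient.mk I z.2 = f z.1) ∧
    (∀ z ∈ G, z.1 = 0 → z.2 = 0) ∧ ∀ x, (x ^ p, ψ x) ∈ G}
  have hne : ((frobenius k p).prod ψ).range ∈ S := by
    refine ⟨?_, ?_, fun x => ⟨x, rfl⟩⟩
    · rintro _ ⟨x, rfl⟩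
      exact hψ' x
    · rintro _ ⟨x, rfl⟩ hx
      have hx : x ^ p = 0 := hx
      have : x = 0 := (pow_eq_zero_iff hp.out.ne_zero).1 hx
      subst this
      exact map_zero ψ
  obtain ⟨G, -, hG⟩ := zorn_le_nonempty₀ S (by
    intro c hc hchain y hy
    have hmem : ∀ z, z ∈ sSup c ↔ ∃ s ∈ c, z ∈ s := fun z =>
      Subring.mem_sSup_of_directedOn ⟨y, hy⟩ hchain.directedOn
    refine ⟨sSup c, ⟨?_, ?_, ?_⟩, fun z hz => le_sSup hz⟩
    · intro z hz
      obtain ⟨s, hs, hzs⟩ := (hmem z).1 hz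
      exact (hc hs).1 z hzs
    · intro z hz
      obtain ⟨s, hs, hzs⟩ := (hmem z).1 hz
      exact (hc hs).2.1 z hzs
    · intro x
      exact (hmem _).2 ⟨y, hy, (hc hy).2.2 x⟩) _ hne
  obtain ⟨⟨ha, hb, hc⟩, hmax⟩ := hG
  let E : Subfield k :=
    { G.map (RingHom.fst k B) with
      inv_mem' := by
        intro x hx
        by_cases hx0 : x = 0
        · rw [hx0, inv_zero]; exact hx0 ▸ hx
        have h1 : x⁻¹ = x ^ (p - 1) * x⁻¹ ^ p := by
          obtain ⟨n, hn⟩ := Nat.exists_eq_succ_of_ne_zero hp.out.ne_zero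
          rw [hn, Nat.succ_sub_one, pow_succ, ← mul_assoc, ← mul_pow, mul_inv_cancel₀ hx0,
            one_pow, one_mul]
        rw [h1]
        exact (G.map (RingHom.fst k B)).mul_mem ((G.map (RingHom.fst k B)).pow_mem hx _)
          ⟨_, hc x⁻¹, rfl⟩ }
  have hE : ∀ x, x ∈ E ↔ ∃ z ∈ G, z.1 = x := fun x => Iff.rfl
  have hsurj : ∀ c : k, ∃ z ∈ G, z.1 = c := by
    intro c
    by_contra hcE
    rw [← hE] at hcE
    obtain ⟨b, hbc⟩ := Ideal.Quotient.mk_surjective (f c)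
    have hcp : c ^ p ∈ E := (hE _).2 ⟨_, hc c, rfl⟩
    let φ : G →+* E := ((RingHom.fst k B).comp G.subtype).codRestrict E
      fun z => (hE _).2 ⟨z.1, z.2, rfl⟩
    let G' : Subring (k × B) := (Algebra.adjoin G {((c, b) : k × B)}).toSubring
    have hGG' : G ≤ G' := fun z hz =>
      (Algebra.adjoin G {((c, b) : k × B)}).algebraMap_mem ⟨z, hz⟩
    have hzG' : (c, b) ∈ G' := Algebra.subset_adjoin rfl
    have hG'S : G' ∈ S := by
      refine ⟨?_, ?_, fun x => hGG' (hc x)⟩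
      · suffices key : ∀ z ∈ Algebra.adjoin G {((c, b) : k × B)},
            Ideal.Quotient.mk I z.2 = f z.1 from fun z hz => key z hz
        intro z hz
        induction hz using Algebra.adjoin_induction with
        | mem x hx => rw [Set.mem_singleton_iff.1 hx]; exact hbc
        | algebraMap r => exact ha _ r.2
        | add x y _ _ hx hy => rw [Prod.snd_add, Prod.fst_add, map_add, map_add, hx, hy]
        | mul x y _ _ hx hy => rw [Prod.snd_mul, Prod.fst_mul, map_mul, map_mul, hx, hy]
      · intro z hz hz0
        have hz : z ∈ Algebra.adjoin G {((c, b) : k × B)} := hz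
        rw [Algebra.adjoin_singleton_eq_range_aeval] at hz
        obtain ⟨q, rfl⟩ := hz
        let w : G := ⟨(c ^ p, ψ c), hc c⟩
        have hm : (X ^ p - C w : G[X]).Monic := monic_X_pow_sub_C w hp.out.ne_zero
        have hmz : aeval ((c, b) : k × B) (X ^ p - C w : G[X]) = 0 := by
          rw [map_sub, map_pow, aeval_X, aeval_C]
          change ((c, b) : k × B) ^ p - (c ^ p, ψ c) = 0
          rw [hψ c b hbc]
          ext <;> simp
        have hq : aeval ((c, b) : k × B) q =
            aeval ((c, b) : k × B) (q %ₘ (X ^ p - C w)) := by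
          conv_lhs => rw [← modByMonic_add_div q (X ^ p - C w)]
          rw [map_add, map_mul, hmz, zero_mul, add_zero]
        change ((aeval ((c, b) : k × B)) q).1 = 0 at hz0
        change ((aeval ((c, b) : k × B)) q).2 = 0
        rw [hq] at hz0 ⊢
        set r := q %ₘ (X ^ p - C w) with hr
        have hG0 : Nontrivial G := inferInstance
        have hdeg : r.degree < p := by
          have := degree_modByMonic_lt q hm
          rwa [degree_X_pow_sub_C hp.out.pos] at this
        have hirr : Irreducible (X ^ p - C (⟨c ^ p, hcp⟩ : E) : E[X]) := by
          refine X_pow_sub_C_irreducible_of_prime hp.out fun y hy => hcE ?_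
          have h1 : (y : k) ^ p = c ^ p := congrArg Subtype.val hy
          have h2 : (y : k) = c := frobenius_inj k p h1
          rw [← h2]; exact y.2
        have hmin : minpoly E c = X ^ p - C (⟨c ^ p, hcp⟩ : E) := by
          refine (minpoly.eq_of_irreducible_of_monic hirr ?_
            (monic_X_pow_sub_C _ hp.out.ne_zero)).symm
          rw [map_sub, map_pow, aeval_X, aeval_C]
          exact sub_self _
        have hr0 : aeval c (r.map φ) = 0 := by
          rw [aeval_def, eval₂_map]
          rw [aeval_def] at hz0
          have h1 := hom_eval₂ r (algebraMap G (k × B)) (RingHom.fst k B) (c, b)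
          exact h1.symm.trans hz0
        have hr1 : r.map φ = 0 := by
          by_contra hne
          have h1 := minpoly.degree_le_of_ne_zero E c hne hr0
          rw [hmin, degree_X_pow_sub_C hp.out.pos] at h1
          exact absurd (h1.trans degree_map_le) (not_le.2 hdeg)
        have hr2 : r = 0 := by
          refine Polynomial.ext fun n => ?_
          rw [coeff_zero]
          have h1 : φ (r.coeff n) = 0 := by rw [← coeff_map, hr1, coeff_zero]
          have h2 : (r.coeff n).1.1 = 0 := congrArg Subtype.val h1
          have h3 := hb _ (r.coeff n).2 h2
          have h4 : (r.coeff n).1 = 0 := Prod.ext h2 h3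
          exact Subtype.ext h4
        rw [hr2, map_zero]
        rfl
    exact hcE ((hE _).2 ⟨_, hmax hG'S hGG' hzG', rfl⟩)
  let θ : G →+* k := (RingHom.fst k B).comp G.subtype
  have hθ : Function.Bijective θ := by
    constructor
    · rw [injective_iff_map_eq_zero]
      intro z hz
      exact Subtype.ext (Prod.ext hz (hb _ z.2 hz))
    · intro c
      obtain ⟨z, hz, hzc⟩ := hsurj c
      exact ⟨⟨z, hz⟩, hzc⟩
  let Θ := RingEquiv.ofBijective θ hθ
  refine ⟨((RingHom.snd k B).comp G.subtype).comp Θ.symm.toRingHom, ?_⟩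
  ext x
  have h1 := ha _ (Θ.symm x).2
  have h2 : (Θ.symm x).1.1 = x := Θ.apply_symm_apply x
  rw [h2] at h1
  exact h1

theorem formallySmooth_zmod (k : Type*) [Field k] (p : ℕ) [hp : Fact p.Prime] [Algebra (ZMod p) k] :
    Algebra.FormallySmooth (ZMod p) k := by
  haveI : CharP k p := charP_of_injective_algebraMap (algebraMap (ZMod p) k).injective p
  refine .of_comp_surjective fun B _ _ I hI f => ?_
  cases subsingleton_or_nontrivial B with
  | inl h =>
    exact ⟨{ toFun := fun _ => 0, map_one' := Subsingleton.elim _ _,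
              map_mul' := fun _ _ => Subsingleton.elim _ _,
              map_zero' := rfl, map_add' := fun _ _ => Subsingleton.elim _ _,
              commutes' := fun _ => Subsingleton.elim _ _ }, by
      ext x
      obtain ⟨y, hy⟩ := Ideal.Quotient.mk_surjective (f x)
      rw [← hy]
      exact congrArg (Ideal.Quotient.mk I) (Subsingleton.elim (0 : B) y)⟩
  | inr h =>
    haveI : CharP B p := charP_of_injective_algebraMap (algebraMap (ZMod p) B).injective p
    obtain ⟨g, hg⟩ := lift_square_zero p I hI f.toRingHom
    refine ⟨{ g with commutes' := fun r => ?_ }, ?_⟩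
    · exact RingHom.congr_fun (RingHom.ext_zmod (g.comp (algebraMap (ZMod p) k)) _) r
    · ext x
      exact RingHom.congr_fun hg x

end FormallySmooth


section CompleteRing

variable {C : Type*} [CommRing C]

/-- A local ring which is complete, with finitely generated maximal ideal and containing a
field mapping onto its residue field, is Noetherian. -/
theorem noetherian_of_complete [IsLocalRing C] [IsAdicComplete (maximalIdeal C) C]
    (hfg : (maximalIdeal C).FG) (K : Type*) [Field K] [Algebra K C]
    (hK : Function.Surjective (algebraMap K (ResidueField C))) : IsNoetherianRing C := by
  obtain ⟨n, g, hg⟩ := Submodule.fg_iff_exists_fin_generating_family.1 hfg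
  have hg : Ideal.span (Set.range g) = maximalIdeal C := hg
  let P := MvPolynomial (Fin n) K
  let 𝔫 : Ideal P := MvPolynomial.idealOfVars (Fin n) K
  let P' := AdicCompletion 𝔫 P
  have h𝔫 : 𝔫.FG := MvPolynomial.idealOfVars_fg _ _
  have : IsNoetherianRing P' := isNoetherianRing_of_ringEquiv (MvPowerSeries (Fin n) K)
    (MvPowerSeries.toAdicCompletionAlgEquiv (Fin n) K).toRingEquiv
  let a : P →+* C := (MvPolynomial.aeval g).toRingHom
  have ha : 𝔫.map a = maximalIdeal C := by
    rw [← hg, Ideal.map_span, ← Set.range_comp]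
    congr 2
    ext i
    exact MvPolynomial.aeval_X g i
  have ha' : ∀ k, 𝔫 ^ k ≤ (maximalIdeal C ^ k).comap a := by
    intro k
    rw [← Ideal.map_le_iff_le_comap, Ideal.map_pow, ha]
  let F : (k : ℕ) → P' →+* C ⧸ maximalIdeal C ^ k := fun k =>
    (Ideal.quotientMap (maximalIdeal C ^ k) a (ha' k)).comp (AdicCompletion.evalₐ 𝔫 k).toRingHom
  have hF : ∀ k (x : AdicCompletion.AdicCauchySequence 𝔫 P),
      F k (AdicCompletion.mk 𝔫 P x) = Ideal.Quotient.mk _ (a (x.val k)) := by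
    intro k x
    change Ideal.quotientMap (maximalIdeal C ^ k) a (ha' k)
      (AdicCompletion.evalₐ 𝔫 k (AdicCompletion.mk 𝔫 P x)) = _
    rw [AdicCompletion.evalₐ_mk, Ideal.quotientMap_mk]
  have hcomp : ∀ {m k : ℕ} (hle : m ≤ k),
      (Ideal.Quotient.factorPow (maximalIdeal C) hle).comp (F k) = F m := by
    intro m k hle
    ext x
    obtain ⟨x, rfl⟩ := AdicCompletion.mk_surjective 𝔫 P x
    rw [RingHom.comp_apply, hF, hF]
    change Ideal.Quotient.mk _ _ = _
    rw [Ideal.Quotient.eq, ← map_sub, ← Ideal.mem_comap]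
    apply ha' m
    have h1 := (x.2 hle).symm
    rw [SModEq.sub_mem] at h1
    simpa using h1
  let Φ : P' →+* C := IsAdicComplete.liftRingHom (maximalIdeal C) F hcomp
  have hΦ : ∀ x : P, Φ (algebraMap P P' x) = a x := by
    intro x
    have : Φ.comp (algebraMap P P') = a := by
      apply DFunLike.coe_injective
      apply IsHausdorff.funext' (maximalIdeal C)
      intro k y
      change Ideal.Quotient.mk _ (Φ (algebraMap P P' y)) = _
      rw [IsAdicComplete.mk_liftRingHom]
      change Ideal.quotientMap (maximalIdeal C ^ k) a (ha' k)
        (AdicCompletion.evalₐ 𝔫 k (algebraMap P P' y)) = _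
      rw [AlgHom.commutes]
      rfl
    rw [← this]; rfl
  have hmap : (𝔫.map (algebraMap P P')).map Φ = maximalIdeal C := by
    rw [Ideal.map_map, ← ha]
    congr 1
    ext x
    · simpa using hΦ _
    · simpa using hΦ _
  have : IsAdicComplete (𝔫.map (algebraMap P P')) P' := AdicCompletion.isAdicComplete_self 𝔫 h𝔫
  have : IsHausdorff ((𝔫.map (algebraMap P P')).map Φ) C := by rw [hmap]; infer_instance
  refine isNoetherianRing_of_surjective P' C Φ ?_
  apply surjective_of_mk_map_comp_surjective (I := 𝔫.map (algebraMap P P')) Φ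
  rw [hmap]
  intro y
  obtain ⟨x, hx⟩ := hK y
  refine ⟨algebraMap P P' (MvPolynomial.C x), ?_⟩
  rw [RingHom.comp_apply, hΦ, ← hx]
  have h1 : a (MvPolynomial.C x) = algebraMap K C x := MvPolynomial.aeval_C g x
  rw [h1]
  rfl

lemma mem_smul_pi {r : ℕ} (I : Ideal C) (x : Fin r → C) :
    x ∈ (I • ⊤ : Submodule C (Fin r → C)) ↔ ∀ i, x i ∈ I := by
  constructor
  · intro hx i
    have h1 := Submodule.mem_map_of_mem (f := LinearMap.proj (R := C) (φ := fun _ => C) i) hx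
    rw [Submodule.map_smul''] at h1
    have h2 : I • Submodule.map (LinearMap.proj (R := C) (φ := fun _ => C) i) ⊤ ≤ I :=
      Ideal.mul_le_left
    exact h2 h1
  · intro h
    have hx : x = ∑ i, x i • (Pi.single i 1 : Fin r → C) := by
      ext j
      simp [Finset.sum_apply, Pi.single_apply]
    rw [hx]
    exact Submodule.sum_mem _ fun i _ => Submodule.smul_mem_smul (h i) Submodule.mem_top

lemma isPrecomplete_pi {r : ℕ} (I : Ideal C) [IsPrecomplete I C] :
    IsPrecomplete I (Fin r → C) := by
  rw [isPrecomplete_iff]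
  intro f hf
  have : ∀ i, ∃ L : C, ∀ n, f n i ≡ L [SMOD (I ^ n • ⊤ : Submodule C C)] := by
    intro i
    refine IsPrecomplete.prec' (fun n => f n i) fun {m n} hmn => ?_
    have h1 := hf hmn
    rw [SModEq.sub_mem, mem_smul_pi] at h1
    rw [SModEq.sub_mem]
    simpa using h1 i
  choose L hL using this
  refine ⟨L, fun n => ?_⟩
  rw [SModEq.sub_mem, mem_smul_pi]
  intro i
  have := hL i n
  rw [SModEq.sub_mem] at this
  simpa using this

theorem frobenius_finite_of_complete [IsLocalRing C] [IsNoetherianRing C]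
    [IsAdicComplete (maximalIdeal C) C] (p : ℕ) [hp : Fact p.Prime] [CharP C p]
    (hperf : ∀ x : ResidueField C, ∃ y, y ^ p = x) : (frobenius C p).Finite := by
  let φ := iterateFrobenius C p 1
  let N := Push φ C
  have h1 : qlen (maximalIdeal C) N ≠ ⊤ := by
    rw [qlen_push φ (residue_surjective_pow p hperf 1), qlen_self]
    apply length_quot_ne_top
    intro x hx
    refine ⟨p ^ 1, ?_⟩
    rw [← iterateFrobenius_def]
    exact Ideal.mem_map_of_mem _ hx
  rw [qlen_eq_quot, Module.length_ne_top_iff] at h1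
  have h2 := isFiniteLength_iff_isNoetherian_isArtinian.1 h1
  have h3 : IsNoetherian C (N ⧸ (maximalIdeal C • ⊤ : Submodule C N)) := h2.1
  have h4 : Module.Finite C (N ⧸ (maximalIdeal C • ⊤ : Submodule C N)) := inferInstance
  obtain ⟨r, f, hf⟩ := Module.Finite.exists_fin' C (N ⧸ (maximalIdeal C • ⊤ : Submodule C N))
  obtain ⟨g, hg⟩ := Module.projective_lifting_property
    (Submodule.mkQ (maximalIdeal C • ⊤ : Submodule C N)) f (Submodule.mkQ_surjective _)
  have h5 : IsPrecomplete (maximalIdeal C) (Fin r → C) := isPrecomplete_pi _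
  have h6 : ∀ n, ∀ x ∈ (maximalIdeal C ^ n • ⊤ : Submodule C N),
      (show C from x) ∈ maximalIdeal C ^ n := by
    intro n x hx
    refine Submodule.smul_induction_on hx ?_ ?_
    · intro c hc y _
      change φ c * (show C from y) ∈ _
      refine Ideal.mul_mem_right _ _ ?_
      rw [iterateFrobenius_def]
      exact Ideal.pow_mem_of_mem _ hc _ (by simp [hp.out.pos])
    · intro x y hx hy
      exact Ideal.add_mem _ hx hy
  have h7 : IsHausdorff (maximalIdeal C) N := by
    rw [isHausdorff_iff]
    intro x hx
    have key : ∀ y : C, (∀ n, y ∈ maximalIdeal C ^ n) → y = 0 := by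
      intro y hy
      refine IsHausdorff.haus (I := maximalIdeal C) (M := C) inferInstance y fun n => ?_
      rw [SModEq.zero]
      simpa using hy n
    refine key x fun n => h6 n x ?_
    have := hx n
    rwa [SModEq.zero] at this
  have h8 : Function.Surjective g := by
    apply surjective_of_mkQ_comp_surjective (I := maximalIdeal C)
    rw [hg]
    exact hf
  have h9 : Module.Finite C N := Module.Finite.of_surjective g h8
  have h10 : iterateFrobenius C p 1 = frobenius C p := by
    ext x; simp [iterateFrobenius_def, frobenius_def]
  rw [← h10]
  exact h9

end CompleteRing


section Reduction

lemma length_quot_map_of_surjective {C B : Type*} [CommRing C] [CommRing B] (π : C →+* B)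
    (hπ : Function.Surjective π) (J : Ideal C) (hJ : RingHom.ker π ≤ J) :
    Module.length C (C ⧸ J) = Module.length B (B ⧸ J.map π) := by
  letI := π.toAlgebra
  rw [← Module.length_eq_of_surjective (S := C) (R := B) hπ]
  let f : C →ₗ[C] B ⧸ J.map π := (Algebra.linearMap C (B ⧸ J.map π))
  have hf : Function.Surjective f := by
    intro y
    obtain ⟨b, rfl⟩ := Ideal.Quotient.mk_surjective y
    obtain ⟨c, rfl⟩ := hπ b
    exact ⟨c, rfl⟩
  have hker : LinearMap.ker f = J := by
    have h1 : (J.map π).comap π = J := by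
      rw [Ideal.comap_map_of_surjective' π hπ, sup_eq_left]
      exact hJ
    refine Eq.trans ?_ h1
    ext x
    exact Ideal.Quotient.eq_zero_iff_mem
  have e := f.quotKerEquivOfSurjective hf
  rw [hker] at e
  exact e.length_eq

lemma flat_quot {A R : Type*} [CommRing A] [CommRing R] [Algebra A R] [Module.Flat A R]
    (I : Ideal A) : Module.Flat (A ⧸ I) (R ⧸ I.map (algebraMap A R)) := by
  let e : (R ⧸ I.map (algebraMap A R)) ≃ₗ[A] (A ⧸ I) ⊗[A] R :=
    ((Algebra.TensorProduct.quotIdealMapEquivTensorQuot R I).toLinearEquiv.restrictScalars A).trans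
      (TensorProduct.comm A R (A ⧸ I))
  exact Module.Flat.of_linearEquiv
    (e.extendScalarsOfSurjective (S := A ⧸ I) Ideal.Quotient.mk_surjective)

lemma length_flat {A B : Type*} [CommRing A] [CommRing B] [IsLocalRing A] [IsLocalRing B]
    [Algebra A B] [Module.Flat A B]
    (hm : (maximalIdeal A).map (algebraMap A B) = maximalIdeal B) (𝔞 : Ideal A) :
    Module.length B (B ⧸ 𝔞.map (algebraMap A B)) = Module.length A (A ⧸ 𝔞) := by
  haveI : IsLocalHom (algebraMap A B) :=
    ((IsLocalRing.local_hom_TFAE _).out 0 2).mpr hm.le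
  rw [(Algebra.TensorProduct.quotIdealMapEquivTensorQuot B 𝔞).toLinearEquiv.length_eq,
    IsLocalRing.length_baseChange A B, hm]
  have : IsSimpleModule B (B ⧸ maximalIdeal B) :=
    isSimpleModule_iff_isCoatom.2 (maximalIdeal.isMaximal B).out
  rw [Module.length_eq_one B, mul_one]

section Completion

variable {A R K : Type*} [CommRing A] [IsLocalRing A] [IsNoetherianRing A] [CommRing R]
  [Algebra A R] [Module.Flat A R] [Field K] [Algebra K R]

lemma isMaximal_of_bij (M : Ideal R)
    (hK : Function.Bijective ((Ideal.Quotient.mk M).comp (algebraMap K R))) : M.IsMaximal := by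
  apply Ideal.Quotient.maximal_of_isField
  exact (RingEquiv.ofBijective _ hK).symm.toMulEquiv.isField (Field.toIsField K)

theorem conv_of_data (p d : ℕ) [hp : Fact p.Prime] [CharP A p] (hd : ringKrullDim A = d)
    (I : Ideal A) (hI : I.radical = maximalIdeal A)
    (hK : Function.Bijective ((Ideal.Quotient.mk ((maximalIdeal A).map (algebraMap A R))).comp
      (algebraMap K R))) (hperf : ∀ x : K, ∃ y, y ^ p = x) :
    ∃ L : ℝ, Tendsto (fun e : ℕ => ((Module.length A (A ⧸ I.bracketPow (p ^ e))).toNat : ℝ) /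
      (p : ℝ) ^ (e * d)) atTop (𝓝 L) := by
  set 𝔪 := maximalIdeal A with h𝔪
  set M := 𝔪.map (algebraMap A R) with hM
  have hMmax : M.IsMaximal := isMaximal_of_bij M hK
  have hMfg : M.FG := Ideal.FG.map (IsNoetherian.noetherian 𝔪) _
  let C := AdicCompletion M R
  let ι : A →+* C := (algebraMap R C).comp (algebraMap A R)
  have hmC : (M.map (algebraMap R C)).IsMaximal :=
    AdicCompletion.isMaximal_map_of_le M M le_rfl hMfg
  have hcomp : IsAdicComplete (M.map (algebraMap R C)) C := AdicCompletion.isAdicComplete_self M hMfg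
  haveI hloc : IsLocalRing C := isLocalRing_of_isAdicComplete_maximal (M.map (algebraMap R C))
  have hmax : M.map (algebraMap R C) = maximalIdeal C := IsLocalRing.eq_maximalIdeal hmC
  have hι : 𝔪.map ι = maximalIdeal C := by rw [← hmax, Ideal.map_map]
  haveI : IsAdicComplete (maximalIdeal C) C := hmax ▸ hcomp
  have hKC : Function.Surjective (algebraMap K (ResidueField C)) := by
    intro y
    obtain ⟨c, rfl⟩ := Ideal.Quotient.mk_surjective y
    obtain ⟨x, hx⟩ := hK.2 (AdicCompletion.evalOneₐ M c)
    refine ⟨x, ?_⟩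
    change Ideal.Quotient.mk (maximalIdeal C) (algebraMap K C x) = _
    rw [Ideal.Quotient.eq, ← hmax, ← AdicCompletion.ker_evalOneₐ_eq_map M hMfg, RingHom.mem_ker,
      map_sub, sub_eq_zero]
    refine Eq.trans ?_ hx
    rfl
  haveI : IsNoetherianRing C :=
    noetherian_of_complete (hι ▸ Ideal.FG.map (IsNoetherian.noetherian 𝔪) _) K hKC
  haveI : CharP C p := by
    rw [CharP.charP_iff_prime_eq_zero hp.out, ← map_natCast ι, CharP.cast_eq_zero, map_zero]
  have hperfC : ∀ x : ResidueField C, ∃ y, y ^ p = x := by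
    intro x
    obtain ⟨x, rfl⟩ := hKC x
    obtain ⟨y, rfl⟩ := hperf x
    exact ⟨algebraMap K _ y, by rw [map_pow]⟩
  have hF := frobenius_finite_of_complete (C := C) p hperfC
  -- radicals
  have hrad : ∀ J : Ideal A, 𝔪 ≤ J.radical → maximalIdeal C ≤ (J.map ι).radical := by
    intro J hJ
    rw [← hι, Ideal.map_le_iff_le_comap]
    intro x hx
    obtain ⟨n, hn⟩ := hJ hx
    exact ⟨n, by rw [← map_pow]; exact Ideal.mem_map_of_mem _ hn⟩
  have hle : ∀ J : Ideal A, J ≤ 𝔪 → J.map ι ≤ maximalIdeal C := by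
    intro J hJ
    rw [← hι]; exact Ideal.map_mono hJ
  -- dimension
  have hdim : ringKrullDim C ≤ d := by
    classical
    obtain ⟨s, hs, hcard⟩ := Ideal.exists_finset_card_eq_height_of_isNoetherianRing 𝔪
    have h1 : maximalIdeal C ∈ (Ideal.span (s.image ι : Set C)).minimalPrimes := by
      rw [Finset.coe_image, ← Ideal.map_span]
      exact mem_minimalPrimes_of_radical (hle _ hs.1.2)
        (hrad _ (radical_eq_of_mem_minimalPrimes hs))
    have h2 := Ideal.height_le_card_of_mem_minimalPrimes_span_finset h1
    rw [← IsLocalRing.maximalIdeal_height_eq_ringKrullDim] at hd ⊢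
    have h3 : (s.card : ℕ∞) = d := by rw [hcard]; exact_mod_cast hd
    have h4 : (maximalIdeal C).height ≤ (d : ℕ∞) := by
      refine h2.trans ?_
      rw [← h3]
      exact_mod_cast Finset.card_image_le
    exact_mod_cast h4
  have hJ : (I.map ι).radical = maximalIdeal C := by
    apply le_antisymm
    · refine (Ideal.IsPrime.radical_le_iff inferInstance).2 (hle _ ?_)
      rw [← hI]; exact Ideal.le_radical
    · exact hrad _ hI.ge
  obtain ⟨L, hL⟩ := conv_ffinite (I.map ι) hJ p d hdim hperfC hF
  refine ⟨L, hL.congr fun e => ?_⟩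
  unfold hk
  congr 2
  rw [qlen_self]
  have hb : (I.map ι).bracketPow (p ^ e) = (I.bracketPow (p ^ e)).map ι := by
    rw [bracketPow_eq_map, bracketPow_eq_map, Ideal.map_map, Ideal.map_map]
    congr 1
    ext x
    simp [iterateFrobenius_def]
  rw [hb]
  congr 1
  set 𝔞 := I.bracketPow (p ^ e) with h𝔞
  have h𝔞rad : 𝔪 ≤ 𝔞.radical := by
    rw [← hI]
    exact (Ideal.radical_mono (le_radical_bracketPow I _)).trans (Ideal.radical_idem _).le
  obtain ⟨N, hN⟩ := Ideal.exists_pow_le_of_le_radical_of_fg h𝔞rad (IsNoetherian.noetherian 𝔪)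
  have hN1 : 𝔪 ^ (N + 1) ≤ 𝔞 := (Ideal.pow_le_pow_right (Nat.le_succ N)).trans hN
  set 𝔮 := 𝔪 ^ (N + 1) with h𝔮
  have h𝔮M : 𝔮.map (algebraMap A R) = M ^ (N + 1) := by rw [h𝔮, Ideal.map_pow]
  have h𝔮m : 𝔮 ≤ 𝔪 := Ideal.pow_le_self (Nat.succ_ne_zero N)
  let B := R ⧸ 𝔮.map (algebraMap A R)
  haveI : Nontrivial (A ⧸ 𝔮) := Ideal.Quotient.nontrivial_iff.2
    (ne_top_of_le_ne_top (Ideal.IsPrime.ne_top inferInstance) h𝔮m)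
  haveI : IsLocalRing (A ⧸ 𝔮) := .of_surjective' _ Ideal.Quotient.mk_surjective
  haveI : Nontrivial B := Ideal.Quotient.nontrivial_iff.2
    (ne_top_of_le_ne_top hMmax.ne_top (Ideal.map_mono h𝔮m))
  let π : C →+* B := (Ideal.Quotient.factor h𝔮M.ge).comp
    (AdicCompletion.evalₐ M (N + 1)).toRingHom
  have hπ : Function.Surjective π :=
    (Ideal.Quotient.factor_surjective h𝔮M.ge).comp (AdicCompletion.surjective_evalₐ M (N + 1))
  haveI : IsLocalRing B := .of_surjective' π hπ
  have hπι : π.comp ι = (algebraMap (A ⧸ 𝔮) B).comp (Ideal.Quotient.mk 𝔮) := by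
    ext x
    change Ideal.Quotient.factor h𝔮M.ge (AdicCompletion.evalₐ M (N + 1)
      (algebraMap R C (algebraMap A R x))) = _
    rw [AlgHom.commutes]
    rfl
  have hmk : 𝔪.map (Ideal.Quotient.mk 𝔮) = maximalIdeal (A ⧸ 𝔮) :=
    IsLocalRing.eq_maximalIdeal (Ideal.IsMaximal.map_of_surjective_of_ker_le
      Ideal.Quotient.mk_surjective (by rwa [Ideal.mk_ker]))
  have hkerπ : RingHom.ker π ≤ (M ^ (N + 1)).map (algebraMap R C) := by
    have h1 := AdicCompletion.pow_smul_top_eq_ker_eval (M := R) (n := N + 1) hMfg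
    intro c hc
    obtain ⟨r, hr⟩ := Ideal.Quotient.mk_surjective (AdicCompletion.evalₐ M (N + 1) c)
    have hc : Ideal.Quotient.factor h𝔮M.ge (AdicCompletion.evalₐ M (N + 1) c) = 0 := hc
    rw [← hr, Ideal.Quotient.factor_mk, Ideal.Quotient.eq_zero_iff_mem, h𝔮M,
      ← Ideal.Quotient.eq_zero_iff_mem, hr] at hc
    have h2 : AdicCompletion.eval M R (N + 1) c = 0 := by
      rw [← AdicCompletion.factor_evalₐ_eq_eval M c (by simp), hc, map_zero]
    have h3 : c ∈ (AdicCompletion.eval M R (N + 1)).ker := h2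
    rw [← h1, Ideal.smul_top_eq_map] at h3
    exact h3
  have hmB : (maximalIdeal (A ⧸ 𝔮)).map (algebraMap (A ⧸ 𝔮) B) = maximalIdeal B := by
    rw [← hmk, Ideal.map_map, ← hπι, ← Ideal.map_map, hι]
    refine IsLocalRing.eq_maximalIdeal (Ideal.IsMaximal.map_of_surjective_of_ker_le
      hπ (le_maximalIdeal (RingHom.ker_ne_top π)))
  haveI : Module.Flat (A ⧸ 𝔮) B := flat_quot 𝔮
  rw [length_quot_map_of_surjective π hπ, Ideal.map_map, hπι, ← Ideal.map_map, length_flat hmB,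
    length_quot_map_of_surjective (Ideal.Quotient.mk 𝔮) Ideal.Quotient.mk_surjective]
  · rwa [Ideal.mk_ker]
  · refine hkerπ.trans ?_
    rw [← h𝔮M, Ideal.map_map]
    exact Ideal.map_mono hN1

end Completion

end Reduction


/-! ### Passing to a perfect coefficient field -/

theorem conv_of_section {A B k : Type*} [CommRing A] [IsLocalRing A] [IsNoetherianRing A]
    [CommRing B] [Algebra A B] [Module.Flat A B] [Field k]
    (p d : ℕ) [Fact p.Prime] [CharP A p] (hd : ringKrullDim A = d)
    (I : Ideal A) (hI : I.radical = maximalIdeal A)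
    (ε : B →+* k) (g : k →+* B) (hg : ∀ x, ε (g x) = x)
    (hker : RingHom.ker ε = (maximalIdeal A).map (algebraMap A B)) :
    ∃ L : ℝ, Tendsto (fun e : ℕ =>
      ((Module.length A (A ⧸ I.bracketPow (p ^ e))).toNat : ℝ) / (p : ℝ) ^ (e * d))
      atTop (𝓝 L) := by
  letI : Algebra k B := g.toAlgebra
  let K := AlgebraicClosure k
  let R := B ⊗[k] K
  haveI : IsScalarTower A B R := inferInstance
  haveI : Module.Flat A R := Module.Flat.trans A B R
  letI : Algebra K R := (Algebra.TensorProduct.includeRight (R := k) (A := B) (B := K)).toRingHom.toAlgebra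
  let εk : B →ₐ[k] k := { ε with commutes' := fun x => hg x }
  let π : R →ₐ[k] K := Algebra.TensorProduct.lift ((Algebra.ofId k K).comp εk) (AlgHom.id k K)
    (fun _ _ => Commute.all _ _)
  have hπt : ∀ (b : B) (c : K), π (b ⊗ₜ c) = algebraMap k K (εk b) * c := fun b c =>
    Algebra.TensorProduct.lift_tmul _ _ _ _ _
  have hmap : (maximalIdeal A).map (algebraMap A R) =
      (RingHom.ker ε).map (algebraMap B R) := by
    rw [hker, Ideal.map_map]; rfl
  have hπ : ∀ x ∈ (maximalIdeal A).map (algebraMap A R), π x = 0 := by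
    rw [hmap]
    have : (RingHom.ker ε).map (algebraMap B R) ≤ RingHom.ker π.toRingHom := by
      rw [Ideal.map_le_iff_le_comap]
      intro b hb
      have hb' : εk b = 0 := hb
      change π (b ⊗ₜ 1) = 0
      rw [hπt, hb', map_zero, zero_mul]
    intro x hx
    exact this hx
  refine conv_of_data (A := A) (R := R) (K := K) p d hd I hI ⟨?_, ?_⟩
    (fun x => IsAlgClosed.exists_pow_nat_eq x (Fact.out : p.Prime).pos)
  · rw [injective_iff_map_eq_zero]
    intro x hx
    have h1 : algebraMap K R x ∈ (maximalIdeal A).map (algebraMap A R) :=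
      Ideal.Quotient.eq_zero_iff_mem.mp hx
    have h2 := hπ _ h1
    have h3 : π (1 ⊗ₜ x) = 0 := h2
    rwa [hπt, map_one, map_one, one_mul] at h3
  · intro y
    obtain ⟨y, rfl⟩ := Ideal.Quotient.mk_surjective y
    induction y using TensorProduct.induction_on with
    | zero => exact ⟨0, by simp⟩
    | add a b ha hb =>
      obtain ⟨x, hx⟩ := ha
      obtain ⟨x', hx'⟩ := hb
      exact ⟨x + x', by rw [map_add, hx, hx', map_add]⟩
    | tmul b c =>
      refine ⟨algebraMap k K (ε b) * c, ?_⟩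
      change Ideal.Quotient.mk _ ((1 : B) ⊗ₜ[k] (algebraMap k K (ε b) * c) : R) = _
      rw [Ideal.Quotient.eq]
      have e1 : ((1 : B) ⊗ₜ[k] (algebraMap k K (ε b) * c) : R) = (g (ε b)) ⊗ₜ[k] c := by
        rw [← Algebra.smul_def, TensorProduct.tmul_smul, TensorProduct.smul_tmul',
          Algebra.smul_def, mul_one]
        rfl
      rw [e1, ← TensorProduct.sub_tmul, hmap]
      have e2 : ((g (ε b) - b) ⊗ₜ[k] c : R) = (1 ⊗ₜ c) * algebraMap B R (g (ε b) - b) := by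
        change _ = ((1 : B) ⊗ₜ[k] c) * ((g (ε b) - b) ⊗ₜ[k] (1 : K))
        simp
      rw [e2]
      refine Ideal.mul_mem_left _ _ (Ideal.mem_map_of_mem _ ?_)
      simp [RingHom.mem_ker, hg]

theorem conv_main {A : Type*} [CommRing A] [IsLocalRing A] [IsNoetherianRing A]
    (p d : ℕ) [Fact p.Prime] [CharP A p] (hd : ringKrullDim A = d)
    (I : Ideal A) (hI : I.radical = maximalIdeal A) :
    ∃ L : ℝ, Tendsto (fun e : ℕ =>
      ((Module.length A (A ⧸ I.bracketPow (p ^ e))).toNat : ℝ) / (p : ℝ) ^ (e * d))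
      atTop (𝓝 L) := by
  letI : Algebra (ZMod p) A := ZMod.algebra A p
  letI : Field (A ⧸ maximalIdeal A) := Ideal.Quotient.field _
  haveI : Algebra.FormallySmooth (ZMod p) (A ⧸ maximalIdeal A) := formallySmooth_zmod _ p
  obtain ⟨g, hg⟩ := Algebra.FormallySmooth.exists_adicCompletionEvalOneₐ_comp_eq
    (R := ZMod p) (A := A ⧸ maximalIdeal A) (S := A) (I := maximalIdeal A) (AlgHom.id _ _)
  haveI : Module.Flat A (AdicCompletion (maximalIdeal A) A) :=
    AdicCompletion.flat_of_isNoetherian _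
  refine conv_of_section (B := AdicCompletion (maximalIdeal A) A) p d hd I hI
    (AdicCompletion.evalOneₐ (maximalIdeal A)).toRingHom g.toRingHom
    (fun x => DFunLike.congr_fun hg x)
    (AdicCompletion.ker_evalOneₐ_eq_map _ (IsNoetherian.noetherian _))

end HKMonsky

/-- **Monsky.** For an `𝔪`-primary ideal `I` of a `d`-dimensional Noetherian local ring
of characteristic `p`, the Hilbert–Kunz multiplicity
`e_HK(I) = lim_e ℓ_A(A/I^{[p^e]}) / p^{ed}` exists. -/
theorem hilbert_kunz_multiplicity_exists (A : Type*) [CommRing A] [IsLocalRing A]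
    [IsNoetherianRing A] (p : ℕ) [Fact p.Prime] [CharP A p]
    (d : ℕ) (hd : ringKrullDim A = d)
    (I : Ideal A) (hI : I.radical = IsLocalRing.maximalIdeal A) :
    ∃ L : ℝ, Filter.Tendsto
      (fun e : ℕ =>
        ((moduleLength A (A ⧸ I.bracketPow (p ^ e))).toNat : ℝ) / (p : ℝ) ^ (e * d))
      Filter.atTop (nhds L) := by
  have h := HKMonsky.conv_main p d hd I hI
  simpa only [moduleLength, Module.length_eq_height] using h
end

section
/- (Lech) Let (A, 𝔪) be a d-dimensional Noetherian local ring of prime characteristic p and let I ⊆ A be an 𝔪-primary ideal generated by d elements (i.e., generated by a full system of parameters). Then the Hilbert–Samuel multiplicity and the Hilbert–Kunz multiplicity of I coincide: there is a real number L with lim_{n→∞} d!·ℓ_A(A/I^n)/n^d = L = lim_{e→∞} ℓ_A(A/I^{[p^e]})/p^{ed}. -/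
open IsLocalRing Filter Topology
open scoped TensorProduct

namespace LechAux
open Finsupp

theorem length_split {A : Type*} [CommRing A] (K : Ideal A) (y : A) :
    Module.length A (A ⧸ K) =
      Module.length A (A ⧸ (Submodule.comap (LinearMap.toSpanSingleton A A y) K : Ideal A)) +
      Module.length A (A ⧸ (K ⊔ Ideal.span {y})) := by
  refine Module.length_eq_add_of_exact
    (Submodule.mapQ (Submodule.comap (LinearMap.toSpanSingleton A A y) K) K
      (LinearMap.toSpanSingleton A A y) le_rfl)
    (Submodule.factor (le_sup_left : K ≤ K ⊔ Ideal.span {y})) ?_ ?_ ?_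
  · rw [← LinearMap.ker_eq_bot, Submodule.ker_mapQ]
    simp
  · exact Submodule.factor_surjective _
  · rw [LinearMap.exact_iff, Submodule.range_mapQ, Submodule.factor, Submodule.ker_mapQ]
    simp only [Submodule.comap_id, Submodule.map_sup]
    rw [LinearMap.range_toSpanSingleton]
    simp

variable {A : Type*} [CommRing A] {d : ℕ}

def mon (x : Fin d → A) (a : Fin d →₀ ℕ) : A := ∏ i, x i ^ a i

theorem mon_add (x : Fin d → A) (a b : Fin d →₀ ℕ) : mon x (a + b) = mon x a * mon x b := by
  simp [mon, pow_add, Finset.prod_mul_distrib]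

theorem mon_single (x : Fin d → A) (i : Fin d) (n : ℕ) : mon x (single i n) = x i ^ n := by
  rw [mon, Finset.prod_eq_single i]
  · simp
  · intro j _ hj; simp [hj.symm]
  · simp

/-- ideal generated by monomials outside `T` -/
def FT (x : Fin d → A) (T : Finset (Fin d →₀ ℕ)) : Ideal A := Ideal.span (mon x '' {b | b ∉ T})

def Fgt (x : Fin d → A) (a : Fin d →₀ ℕ) : Ideal A :=
  Ideal.span (mon x '' {b | toDegLex a < toDegLex b})

def J (x : Fin d → A) (Q : Ideal A) (a : Fin d →₀ ℕ) : Ideal A :=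
  Submodule.comap (LinearMap.toSpanSingleton A A (mon x a)) (Fgt x a ⊔ Q)

theorem mem_J (x : Fin d → A) (Q : Ideal A) (a : Fin d →₀ ℕ) (c : A) :
    c ∈ J x Q a ↔ c * mon x a ∈ Fgt x a ⊔ Q := by
  simp [J]

theorem length_FT (x : Fin d → A) (Q : Ideal A) (T : Finset (Fin d →₀ ℕ))
    (hT : ∀ a ∈ T, ∀ b, toDegLex b ≤ toDegLex a → b ∈ T) :
    Module.length A (A ⧸ (FT x T ⊔ Q)) = ∑ a ∈ T, Module.length A (A ⧸ J x Q a) := by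
  induction hn : T.card generalizing T with
  | zero =>
    have : T = ∅ := Finset.card_eq_zero.mp hn
    subst this
    have h1 : FT x ∅ = ⊤ := by
      rw [Ideal.eq_top_iff_one]
      exact Ideal.subset_span ⟨0, by simp, by simp [mon]⟩
    rw [h1]
    simp only [Finset.sum_empty]
    rw [Module.length_eq_zero_iff]
    exact Ideal.Quotient.subsingleton_iff.mpr (by simp)
  | succ n ih =>
    have hne : T.Nonempty := Finset.card_pos.mp (by omega)
    obtain ⟨m, hm, hmax⟩ := Finset.exists_max_image T (fun a => toDegLex a) hne
    have hcompl : {b | b ∉ T} = {b | toDegLex m < toDegLex b} := by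
      ext b
      simp only [Set.mem_ofPred_eq]
      constructor
      · intro hb; by_contra h; exact hb (hT m hm b (not_lt.mp h))
      · intro hb h; exact absurd (hmax b h) (not_le.mpr hb)
    have hF : FT x T = Fgt x m := by rw [FT, Fgt, hcompl]
    have hF' : FT x (T.erase m) = FT x T ⊔ Ideal.span {mon x m} := by
      rw [FT, FT, ← Ideal.span_union]
      congr 1
      have : {b | b ∉ T.erase m} = {b | b ∉ T} ∪ {m} := by
        ext b; simp; tauto
      rw [this, Set.image_union, Set.image_singleton]
    have := ih (T.erase m) (by
      intro a ha b hb
      have ha' := Finset.mem_erase.mp ha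
      refine Finset.mem_erase.mpr ⟨?_, hT a ha'.2 b hb⟩
      rintro rfl
      exact ha'.1 (toDegLex_injective (le_antisymm (hmax a ha'.2) hb)))
      (by rw [Finset.card_erase_of_mem hm]; omega)
    rw [← Finset.add_sum_erase T _ hm, ← this, length_split _ (mon x m), hF', hF, J]
    rw [sup_right_comm]

theorem length_anti {I J : Ideal A} (h : I ≤ J) :
    Module.length A (A ⧸ J) ≤ Module.length A (A ⧸ I) :=
  Module.length_le_of_surjective (Submodule.factor h) (Submodule.factor_surjective h)

theorem lt_of_degree {a b : Fin d →₀ ℕ} (h : a.degree < b.degree) : toDegLex a < toDegLex b := by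
  rw [DegLex.lt_iff]; left; exact h

theorem J_mono_Q (x : Fin d → A) {Q Q' : Ideal A} (h : Q ≤ Q') (a) : J x Q a ≤ J x Q' a :=
  Submodule.comap_mono (sup_le_sup_left h _)

theorem J_mono (x : Fin d → A) {a b : Fin d →₀ ℕ} (h : a ≤ b) : J x ⊥ a ≤ J x ⊥ b := by
  obtain ⟨c, rfl⟩ := exists_add_of_le h
  intro r hr
  rw [mem_J, sup_bot_eq] at hr ⊢
  rw [mon_add, ← mul_assoc]
  have : Fgt x a ≤ Submodule.comap (LinearMap.mulRight A (mon x c)) (Fgt x (a + c)) := by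
    rw [Fgt, Ideal.span_le]
    rintro _ ⟨b, hb, rfl⟩
    simp only [Submodule.comap_coe, Set.mem_preimage, LinearMap.mulRight_apply, SetLike.mem_coe]
    rw [← mon_add]
    refine Ideal.subset_span ⟨b + c, ?_, rfl⟩
    simp only [Set.mem_ofPred_eq, toDegLex_add] at hb ⊢
    exact add_lt_add_left hb _
  exact this hr

theorem le_J (x : Fin d → A) (a) : Ideal.span (Set.range x) ≤ J x ⊥ a := by
  rw [Ideal.span_le]
  rintro _ ⟨i, rfl⟩
  rw [SetLike.mem_coe, mem_J, sup_bot_eq]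
  rw [← pow_one (x i), ← mon_single, ← mon_add]
  refine Ideal.subset_span ⟨_, ?_, rfl⟩
  apply lt_of_degree
  simp

noncomputable def simplex (d n : ℕ) : Finset (Fin d →₀ ℕ) := (finite_of_degree_lt (σ := Fin d) n).toFinset

theorem mem_simplex {n : ℕ} {a : Fin d →₀ ℕ} : a ∈ simplex d n ↔ a.degree < n := by simp [simplex]

theorem simplex_lower (n : ℕ) : ∀ a ∈ simplex d n, ∀ b, toDegLex b ≤ toDegLex a → b ∈ simplex d n := by
  intro a ha b hb
  rw [mem_simplex] at *
  by_contra h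
  exact absurd (lt_of_degree (lt_of_lt_of_le ha (not_lt.mp h))) (not_lt.mpr hb)

theorem FT_simplex (x : Fin d → A) (n : ℕ) : FT x (simplex d n) = Ideal.span (Set.range x) ^ n := by
  apply le_antisymm
  · rw [FT, Ideal.span_le]
    rintro _ ⟨b, hb, rfl⟩
    simp only [Set.mem_ofPred_eq, mem_simplex, not_lt] at hb
    refine Ideal.pow_le_pow_right hb ?_
    rw [degree_eq_sum, mon, ← Finset.prod_pow_eq_pow_sum]
    exact Ideal.prod_mem_prod fun i _ => Ideal.pow_mem_pow (Ideal.subset_span (Set.mem_range_self i)) _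
  · induction n with
    | zero =>
      have : (1 : A) ∈ FT x (simplex d 0) :=
        Ideal.subset_span ⟨0, by simp [mem_simplex], by simp [mon]⟩
      rw [(Ideal.eq_top_iff_one _).mpr this]
      exact le_top
    | succ n ih =>
      rw [pow_succ]
      refine (Ideal.mul_mono_left ih).trans ?_
      rw [FT, Ideal.span_mul_span', Ideal.span_le]
      rintro _ ⟨_, ⟨b, hb, rfl⟩, _, ⟨i, rfl⟩, rfl⟩
      refine Ideal.subset_span ⟨b + single i 1, ?_, ?_⟩
      · simp [mem_simplex] at hb ⊢; omega
      · simp [mon_add, mon_single]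

theorem length_pow (x : Fin d → A) (n : ℕ) :
    Module.length A (A ⧸ Ideal.span (Set.range x) ^ n) =
      ∑ a ∈ simplex d n, Module.length A (A ⧸ J x ⊥ a) := by
  rw [← length_FT x ⊥ _ (simplex_lower n), FT_simplex, sup_bot_eq]

noncomputable def box (d n : ℕ) : Finset (Fin d →₀ ℕ) := Finset.univ.finsupp fun _ => Finset.range n

theorem mem_box {n : ℕ} {a : Fin d →₀ ℕ} : a ∈ box d n ↔ ∀ i, a i < n := by
  simp [box, Finset.mem_finsupp_iff]

theorem card_box (d n : ℕ) : (box d n).card = n ^ d := by simp [box, Finset.card_finsupp]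

theorem length_frob (x : Fin d → A) (n : ℕ) :
    Module.length A (A ⧸ Ideal.span (Set.range fun i => x i ^ n)) ≤
      ∑ a ∈ box d n, Module.length A (A ⧸ J x ⊥ a) := by
  set Q := Ideal.span (Set.range fun i => x i ^ n) with hQ
  have hmem : ∀ a : Fin d →₀ ℕ, a ∉ box d n → mon x a ∈ Q := by
    intro a ha
    rw [mem_box] at ha
    push Not at ha
    obtain ⟨i, hi⟩ := ha
    obtain ⟨c, hc⟩ := exists_add_of_le (show single i n ≤ a by simpa using hi)
    rw [hc, mon_add, mon_single]
    exact Ideal.mul_mem_right _ _ (Ideal.subset_span ⟨i, rfl⟩)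
  have h1 : FT x (simplex d (d * n + 1)) ⊔ Q = Q := by
    rw [sup_eq_right, FT, Ideal.span_le]
    rintro _ ⟨b, hb, rfl⟩
    apply hmem
    intro h
    rw [mem_box] at h
    simp only [Set.mem_ofPred_eq, mem_simplex, not_lt] at hb
    have : b.degree ≤ d * n := by
      rw [degree_eq_sum]
      refine (Finset.sum_le_sum fun i _ => (h i).le).trans ?_
      simp
    omega
  have h2 := length_FT x Q _ (simplex_lower (d * n + 1))
  rw [h1] at h2
  rw [h2]
  have h3 : ∑ a ∈ simplex d (d * n + 1), Module.length A (A ⧸ J x Q a) ≤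
      ∑ a ∈ simplex d (d * n + 1) with a ∈ box d n, Module.length A (A ⧸ J x ⊥ a) := by
    rw [Finset.sum_filter]
    refine Finset.sum_le_sum fun a _ => ?_
    split_ifs with h
    · exact length_anti (J_mono_Q x bot_le a)
    · have : J x Q a = ⊤ := by
        rw [Ideal.eq_top_iff_one, mem_J, one_mul]
        exact Ideal.mem_sup_right (hmem a h)
      rw [this, nonpos_iff_eq_zero, Module.length_eq_zero_iff]
      exact Ideal.Quotient.subsingleton_iff.mpr (by simp)
  refine h3.trans (Finset.sum_le_sum_of_subset ?_)
  intro a ha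
  exact (Finset.mem_filter.mp ha).2

theorem card_simplex (d n : ℕ) : (simplex d (n + 1)).card = (n + d).choose d := by
  have : (simplex d (n + 1)).card = (d + 1).multichoose n := by
    induction n with
    | zero =>
      have : simplex d 1 = {0} := by
        ext a
        simp [mem_simplex, degree_eq_zero_iff]
      simp [this]
    | succ n ih =>
      have : simplex d (n + 1 + 1) = simplex d (n + 1) ∪ Finset.finsuppAntidiag Finset.univ (n + 1) := by
        ext a
        simp only [mem_simplex, Finset.mem_union, Finset.mem_finsuppAntidiag, degree_eq_sum]
        have : Finset.univ.sum ⇑a = ∑ i, a i := rfl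
        simp
        omega
      rw [this, Finset.card_union_of_disjoint, ih, Finset.card_finsuppAntidiag_nat_eq_multichoose,
        Nat.multichoose_succ_succ]
      · simp [add_comm]
      · rw [Finset.disjoint_left]
        intro a ha hb
        simp only [mem_simplex, Finset.mem_finsuppAntidiag, degree_eq_sum] at ha hb
        have : Finset.univ.sum ⇑a = ∑ i, a i := rfl
        omega
  rw [this, Nat.multichoose_eq, show d + 1 + n - 1 = n + d by omega]
  exact Nat.choose_symm_of_eq_add (by omega)

theorem tendsto_simplex (d : ℕ) :
    Tendsto (fun n : ℕ => (d.factorial : ℝ) * (simplex d n).card / (n : ℝ) ^ d) atTop (𝓝 1) := by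
  rw [← tendsto_add_atTop_iff_nat 1]
  simp only [card_simplex]
  have h1 : Tendsto (fun n : ℕ => (n.choose d : ℝ) / ((n : ℝ) ^ d / d.factorial)) atTop (𝓝 1) := by
    refine (Asymptotics.isEquivalent_iff_tendsto_one ?_).mp (isEquivalent_choose d)
    filter_upwards [eventually_gt_atTop 0] with n hn
    positivity
  have h2 := (tendsto_add_atTop_iff_nat d).mpr h1
  have h3 : Tendsto (fun n : ℕ => ((n + d : ℕ) : ℝ) / ((n + 1 : ℕ) : ℝ)) atTop (𝓝 1) := by
    have h4 : Tendsto (fun n : ℕ => 1 + ((d : ℝ) - 1) / ((n + 1 : ℕ) : ℝ)) atTop (𝓝 (1 + 0)) :=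
      tendsto_const_nhds.add
        ((tendsto_const_div_atTop_nhds_zero_nat _).comp (tendsto_add_atTop_nat 1))
    rw [add_zero] at h4
    refine h4.congr fun n => ?_
    have : ((n + 1 : ℕ) : ℝ) ≠ 0 := by positivity
    field_simp
    push_cast; ring
  have h5 := h2.mul (h3.pow d)
  simp only [one_pow, mul_one] at h5
  refine h5.congr' ?_
  filter_upwards [eventually_gt_atTop 0] with n hn
  have : ((n + 1 : ℕ) : ℝ) ≠ 0 := by positivity
  have : ((n + d : ℕ) : ℝ) ≠ 0 := by positivity
  rw [div_pow]
  field_simp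

theorem tendsto_bad (a₀ : Fin d →₀ ℕ) :
    Tendsto (fun n : ℕ => (((box d n).filter fun a => ¬ a₀ ≤ a).card : ℝ) / (n : ℝ) ^ d)
      atTop (𝓝 0) := by
  have hg : ∀ n, ((box d n).filter fun a => a₀ ≤ a).card = ∏ i, (n - a₀ i) := by
    intro n
    have : ((box d n).filter fun a => a₀ ≤ a) = Finset.univ.finsupp fun i => Finset.Ico (a₀ i) n := by
      ext a
      simp only [Finset.mem_filter, mem_box, Finset.mem_finsupp_iff, Finsupp.le_def]
      simp [forall_and, and_comm]
    rw [this, Finset.card_finsupp]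
    simp
  have h1 : Tendsto (fun n : ℕ => ∏ i, (((n - a₀ i : ℕ) : ℝ) / (n : ℝ))) atTop
      (𝓝 (∏ i : Fin d, 1)) := by
    refine tendsto_finsetProd _ fun i _ => ?_
    have h4 : Tendsto (fun n : ℕ => 1 - (a₀ i : ℝ) / (n : ℝ)) atTop (𝓝 (1 - 0)) :=
      tendsto_const_nhds.sub (tendsto_const_div_atTop_nhds_zero_nat _)
    rw [sub_zero] at h4
    refine h4.congr' ?_
    filter_upwards [eventually_gt_atTop 0, eventually_ge_atTop (a₀ i)] with n hn hn'
    have : (n : ℝ) ≠ 0 := by positivity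
    rw [Nat.cast_sub hn']
    field_simp
  have h2 : Tendsto (fun n : ℕ => 1 - ∏ i, (((n - a₀ i : ℕ) : ℝ) / (n : ℝ))) atTop (𝓝 0) := by
    have := (tendsto_const_nhds (x := (1 : ℝ))).sub h1
    simpa using this
  refine h2.congr' ?_
  filter_upwards [eventually_gt_atTop 0] with n hn
  have h3 := Finset.card_filter_add_card_filter_not (s := box d n) (fun a => a₀ ≤ a)
  rw [hg, card_box] at h3
  have h4 : ((∏ i, (n - a₀ i) : ℕ) : ℝ) + (((box d n).filter fun a => ¬ a₀ ≤ a).card : ℝ) =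
    (n : ℝ) ^ d := by exact_mod_cast h3
  have : (n : ℝ) ^ d ≠ 0 := by positivity
  rw [Finset.prod_div_distrib, Finset.prod_const]
  push_cast at h4
  simp only [Finset.card_univ, Fintype.card_fin]
  field_simp
  linarith

/-- averaging a bounded eventually constant function -/
theorem tendsto_avg (f : (Fin d →₀ ℕ) → ℕ) (L C : ℕ) (a₀ : Fin d →₀ ℕ)
    (hL : ∀ a, a₀ ≤ a → f a = L) (hC : ∀ a, f a ≤ C) (T : ℕ → Finset (Fin d →₀ ℕ))
    (hT : ∀ n, T n ⊆ box d n) (c : ℝ)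
    (hc : Tendsto (fun n : ℕ => c * ((T n).card : ℝ) / (n : ℝ) ^ d) atTop (𝓝 1)) :
    Tendsto (fun n : ℕ => c * ((∑ a ∈ T n, f a : ℕ) : ℝ) / (n : ℝ) ^ d) atTop (𝓝 L) := by
  have h1 : Tendsto (fun n : ℕ => c * (((∑ a ∈ T n, f a : ℕ) : ℝ) - L * (T n).card) / (n : ℝ) ^ d)
      atTop (𝓝 0) := by
    have h2 := ((tendsto_bad a₀).const_mul (|c| * (C + L)))
    rw [mul_zero] at h2
    refine squeeze_zero_norm (fun n => ?_) h2
    rw [Real.norm_eq_abs, abs_div, abs_mul, abs_of_nonneg (by positivity : (0:ℝ) ≤ (n:ℝ)^d),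
      mul_assoc, mul_div_assoc]
    gcongr
    rw [← mul_div_assoc]
    gcongr
    have h3 : ((∑ a ∈ T n, f a : ℕ) : ℝ) - L * (T n).card = ∑ a ∈ T n, ((f a : ℝ) - L) := by
      push_cast
      rw [Finset.sum_sub_distrib, Finset.sum_const, nsmul_eq_mul, mul_comm]
    rw [h3]
    calc |∑ a ∈ T n, ((f a : ℝ) - L)| ≤ ∑ a ∈ T n, |(f a : ℝ) - L| := Finset.abs_sum_le_sum_abs _ _
      _ ≤ ∑ a ∈ box d n, |(f a : ℝ) - L| :=
          Finset.sum_le_sum_of_subset_of_nonneg (hT n) fun _ _ _ => abs_nonneg _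
      _ ≤ ∑ a ∈ box d n, if ¬ a₀ ≤ a then ((C : ℝ) + L) else 0 := by
          refine Finset.sum_le_sum fun a _ => ?_
          split_ifs with h
          · rw [hL a h]; simp
          · have : (f a : ℝ) ≤ C := by exact_mod_cast hC a
            have h0 : (0 : ℝ) ≤ f a := by positivity
            have h1 : (0 : ℝ) ≤ L := by positivity
            rw [abs_le]; constructor <;> linarith
      _ = (C + L) * (((box d n).filter fun a => ¬ a₀ ≤ a).card : ℝ) := by
          rw [← Finset.sum_filter, Finset.sum_const, nsmul_eq_mul, mul_comm]
  have h2 := h1.add (hc.const_mul (L : ℝ))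
  rw [zero_add, mul_one] at h2
  refine h2.congr fun n => ?_
  ring

theorem simplex_subset_box (d n : ℕ) : simplex d n ⊆ box d n := by
  intro a ha
  rw [mem_simplex] at ha
  rw [mem_box]
  exact fun i => (le_degree i a).trans_lt ha

theorem main (x : Fin d → A) (hfin : Module.length A (A ⧸ Ideal.span (Set.range x)) ≠ ⊤) :
    ∃ L : ℝ,
      Tendsto (fun n : ℕ => (d.factorial : ℝ) *
        ((Module.length A (A ⧸ Ideal.span (Set.range x) ^ n)).toNat : ℝ) / (n : ℝ) ^ d) atTop (𝓝 L) ∧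
      Tendsto (fun n : ℕ => ((Module.length A
        (A ⧸ Ideal.span (Set.range fun i => x i ^ n))).toNat : ℝ) / (n : ℝ) ^ d) atTop (𝓝 L) := by
  set I := Ideal.span (Set.range x) with hI
  have hJfin : ∀ a, Module.length A (A ⧸ J x ⊥ a) ≠ ⊤ := fun a =>
    ne_top_of_le_ne_top hfin (length_anti (le_J x a))
  set f : (Fin d →₀ ℕ) → ℕ := fun a => (Module.length A (A ⧸ J x ⊥ a)).toNat with hf
  have hfc : ∀ a, Module.length A (A ⧸ J x ⊥ a) = (f a : ℕ∞) := fun a =>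
    (ENat.natCast_toNat (hJfin a)).symm
  have hanti : ∀ a b, a ≤ b → f b ≤ f a := fun a b h =>
    ENat.toNat_le_toNat (length_anti (J_mono x h)) (hJfin a)
  obtain ⟨a₀, ha₀⟩ : ∃ a₀, ∀ a, f a₀ ≤ f a := by
    exact ⟨Function.argmin f, fun a => Function.argmin_le f a⟩
  have hL : ∀ a, a₀ ≤ a → f a = f a₀ := fun a h => le_antisymm (hanti _ _ h) (ha₀ a)
  have hC : ∀ a, f a ≤ f 0 := fun a => hanti 0 a (zero_le)
  have hpow : ∀ n, Module.length A (A ⧸ I ^ n) = ((∑ a ∈ simplex d n, f a : ℕ) : ℕ∞) := by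
    intro n
    rw [length_pow, Nat.cast_sum]
    exact Finset.sum_congr rfl fun a _ => hfc a
  have hfr : ∀ n, Module.length A (A ⧸ Ideal.span (Set.range fun i => x i ^ n)) ≤
      ((∑ a ∈ box d n, f a : ℕ) : ℕ∞) := by
    intro n
    refine (length_frob x n).trans (le_of_eq ?_)
    rw [Nat.cast_sum]
    exact Finset.sum_congr rfl fun a _ => hfc a
  have hHS : Tendsto (fun n : ℕ => (d.factorial : ℝ) *
        ((Module.length A (A ⧸ I ^ n)).toNat : ℝ) / (n : ℝ) ^ d) atTop (𝓝 (f a₀)) := by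
    simp only [hpow, ENat.toNat_natCast]
    exact tendsto_avg f (f a₀) (f 0) a₀ hL hC _ (simplex_subset_box d) _ (tendsto_simplex d)
  refine ⟨f a₀, hHS, ?_⟩
  have hup : Tendsto (fun n : ℕ => ((∑ a ∈ box d n, f a : ℕ) : ℝ) / (n : ℝ) ^ d) atTop
      (𝓝 (f a₀)) := by
    have := tendsto_avg f (f a₀) (f 0) a₀ hL hC _ (fun n => Finset.Subset.refl (box d n)) 1 (by
      refine tendsto_const_nhds.congr' ?_
      filter_upwards [eventually_gt_atTop 0] with n hn
      have : (n : ℝ) ^ d ≠ 0 := by positivity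
      rw [card_box]; push_cast; field_simp)
    simpa using this
  refine tendsto_of_tendsto_of_tendsto_of_le_of_le' tendsto_const_nhds hup ?_ ?_
  · filter_upwards [eventually_gt_atTop 0] with n hn
    set y : Fin d → A := fun i => x i ^ n with hy
    set ℓ := (Module.length A (A ⧸ Ideal.span (Set.range y))).toNat with hℓ
    have hℓc : Module.length A (A ⧸ Ideal.span (Set.range y)) = (ℓ : ℕ∞) :=
      (ENat.natCast_toNat (ne_top_of_le_ne_top (ENat.natCast_ne_top _) (hfr n))).symm
    have key : ∀ m, ∑ a ∈ simplex d (n * m), f a ≤ (simplex d m).card * ℓ := by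
      intro m
      have h1 : Module.length A (A ⧸ I ^ (n * m)) ≤
          Module.length A (A ⧸ Ideal.span (Set.range y) ^ m) := by
        apply length_anti
        rw [pow_mul]
        refine Ideal.pow_right_mono ?_ m
        rw [Ideal.span_le]
        rintro _ ⟨i, rfl⟩
        exact Ideal.pow_mem_pow (Ideal.subset_span (Set.mem_range_self i)) n
      have h2 : Module.length A (A ⧸ Ideal.span (Set.range y) ^ m) ≤
          (((simplex d m).card * ℓ : ℕ) : ℕ∞) := by
        rw [length_pow]
        refine (Finset.sum_le_card_nsmul _ _ (ℓ : ℕ∞) fun a _ => ?_).trans (le_of_eq ?_)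
        · rw [← hℓc]; exact length_anti (le_J y a)
        · simp
      have := h1.trans h2
      rw [hpow] at this
      exact_mod_cast this
    have hl := (hHS.comp (tendsto_id.const_mul_atTop' hn : Tendsto (fun m => n * m) atTop atTop))
    have hr := (tendsto_simplex d).mul_const ((ℓ : ℝ) / (n : ℝ) ^ d)
    rw [one_mul] at hr
    refine le_of_tendsto_of_tendsto hl hr ?_
    filter_upwards [eventually_gt_atTop 0] with m hm
    simp only [Function.comp, hpow, ENat.toNat_natCast]
    have h3 : ((∑ a ∈ simplex d (n * m), f a : ℕ) : ℝ) ≤ (simplex d m).card * ℓ := by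
      exact_mod_cast key m
    rw [div_mul_div_comm, mul_assoc]
    push_cast
    rw [mul_pow, mul_comm ((n:ℝ)^d)]
    push_cast at h3
    gcongr
  · filter_upwards with n
    gcongr
    exact ENat.toNat_le_of_le_natCast (hfr n)

end LechAux

/-- **Lech.** For an `𝔪`-primary ideal `I` of a `d`-dimensional Noetherian local ring of
characteristic `p` generated by `d` elements (a parameter ideal), the Hilbert–Samuel
multiplicity and the Hilbert–Kunz multiplicity of `I` coincide. -/
theorem hilbert_samuel_eq_hilbert_kunz_of_parameter (A : Type*) [CommRing A]
    [IsLocalRing A] [IsNoetherianRing A] (p : ℕ) [Fact p.Prime] [CharP A p]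
    (d : ℕ) (hd : ringKrullDim A = d)
    (I : Ideal A) (hI : I.radical = IsLocalRing.maximalIdeal A)
    (x : Fin d → A) (hgen : I = Ideal.span (Set.range x)) :
    ∃ L : ℝ,
      Filter.Tendsto
        (fun n : ℕ =>
          (d.factorial : ℝ) * ((moduleLength A (A ⧸ I ^ n)).toNat : ℝ) / (n : ℝ) ^ d)
        Filter.atTop (nhds L) ∧
      Filter.Tendsto
        (fun e : ℕ =>
          ((moduleLength A (A ⧸ I.bracketPow (p ^ e))).toNat : ℝ) / (p : ℝ) ^ (e * d))
        Filter.atTop (nhds L) := by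
  have hfin : Module.length A (A ⧸ I) ≠ ⊤ := by
    have hle : I ≤ maximalIdeal A := hI ▸ Ideal.le_radical
    have hart : IsArtinianRing (A ⧸ I) := by
      apply IsLocalRing.quotient_artinian_of_mem_minimalPrimes_of_isLocalRing
      refine ⟨⟨(maximalIdeal.isMaximal A).isPrime, hle⟩, ?_⟩
      rintro P ⟨hP, hIP⟩ _
      rw [← hI]
      exact hP.radical_le_iff.mpr hIP
    have : IsArtinian A (A ⧸ I) := 
      isArtinian_of_surjective_algebraMap (S := A) (R := A ⧸ I) (M := A ⧸ I)
        (Ideal.Quotient.mk_surjective (I := I))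
    exact Module.length_ne_top
  subst hgen
  obtain ⟨L, h1, h2⟩ := LechAux.main x hfin
  refine ⟨L, ?_, ?_⟩
  · simpa only [moduleLength, ← Module.length_eq_height] using h1
  · have hb : ∀ e, (Ideal.span (Set.range x)).bracketPow (p ^ e) =
        Ideal.span (Set.range fun i => x i ^ p ^ e) := by
      intro e
      have : (Ideal.span (Set.range x)).bracketPow (p ^ e) =
        Ideal.map (iterateFrobenius A p e) (Ideal.span (Set.range x)) := rfl
      rw [this, Ideal.map_span, ← Set.range_comp]
      rfl
    have h3 := h2.comp (tendsto_pow_atTop_atTop_of_one_lt (Fact.out : p.Prime).one_lt)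
    refine h3.congr fun e => ?_
    simp only [Function.comp, moduleLength, ← Module.length_eq_height]
    rw [hb, pow_mul]
    push_cast
    rfl
end
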